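/- arXiv:2602.10795 — 3 statements merged into one kernel-verified Lean document; each statement's English description precedes it below -/
import Mathlib

section
/- Poincaré–Miranda theorem: Let f₁, ..., f_d : [-1,1]^d → ℝ be continuous functions such that for each i, f_i(x) ≤ 0 whenever x_i = -1 and f_i(x) ≥ 0 whenever x_i = 1. Then there exists a point x* ∈ [-1,1]^d with f_i(x*) = 0 for all i ∈ [d]. -/
/-!
The combinatorial core is a mod 2 degree. For labels `g₀, …, g_{d-1}` on `ℤᵈ` that vanish on
`{xⱼ ≤ 0}` and equal `1` on `{n ≤ xⱼ}` respectively, sum the cup product `δg₀ ⌣ ⋯ ⌣ δg_{d-1}` over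
all simplices of the Freudenthal triangulation of the grid `[0, n]ᵈ`. Changing a single label `gᵢ`
changes the integrand by the coboundary of a cochain supported in the grid, so by Stokes' theorem
the sum does not depend on the labels; for the indicators of `1 ≤ xⱼ` exactly one simplex
contributes. Hence the sum is `1`, and some simplex carries both values of every label. Applied to
the signs of the `fⱼ` on finer and finer grids, this yields approximate common zeros, and
compactness a common zero.
-/

open Finset Function

namespace PoincareMiranda

section Cochains

variable {X R : Type*}

/-- The increasing enumeration of `ℕ \ {k}`. A simplex is encoded as the sequence `q : ℕ → X` of
its vertices, so that its `k`-th face is `q ∘ skip k`; a `p`-cochain is a function of `q` that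
depends on `q 0, …, q p` only, and may be evaluated on longer sequences. -/
def skip (k m : ℕ) : ℕ := if m < k then m else m + 1

lemma skip_of_lt {k m : ℕ} (h : m < k) : skip k m = m := if_pos h

lemma skip_of_le {k m : ℕ} (h : k ≤ m) : skip k m = m + 1 := if_neg h.not_gt

lemma skip_ne (k m : ℕ) : skip k m ≠ k := by
  unfold skip
  split_ifs <;> omega

lemma skip_add (k m p : ℕ) : skip (k + p) (m + p) = skip k m + p := by
  unfold skip
  split_ifs <;> omega

/-- The coboundary of a `p`-cochain with coefficients of characteristic two, where the usual
alternating signs disappear. -/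
def coboundary [AddCommMonoid R] (p : ℕ) (α : (ℕ → X) → R) (q : ℕ → X) : R :=
  ∑ k ∈ range (p + 2), α (q ∘ skip k)

/-- The cup product of a `p`-cochain with a cochain. -/
def cup [Mul R] (p : ℕ) (α β : (ℕ → X) → R) (q : ℕ → X) : R :=
  α q * β fun m => q (m + p)

/-- The `0`-cochain given by a function on vertices. -/
def ofVertex (g : X → R) (q : ℕ → X) : R := g (q 0)

/-- The coboundary of the `0`-cochain given by a function on vertices, in characteristic two. -/
def delta [Add R] (g : X → R) (q : ℕ → X) : R :=
  g (q 0) + g (q 1)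

/-- The cup product `δg₀ ⌣ ⋯ ⌣ δg_{n-1}`. -/
def cupDelta [CommSemiring R] {n : ℕ} (g : Fin n → X → R) (q : ℕ → X) : R :=
  ∏ j : Fin n, (g j (q j) + g j (q (j + 1)))

/-- The cup product `δg₀ ⌣ ⋯ ⌣ gᵢ ⌣ ⋯ ⌣ δg_{n-1}`, a cochain whose coboundary is
`δg₀ ⌣ ⋯ ⌣ δg_{n-1}`. -/
def primitive [CommSemiring R] : {n : ℕ} → (Fin n → X → R) → Fin n → (ℕ → X) → R
  | _ + 1, g, ⟨0, _⟩ => cup 0 (ofVertex (g 0)) (cupDelta (Fin.tail g))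
  | _ + 1, g, ⟨i + 1, hi⟩ =>
    cup 1 (delta (g 0)) (primitive (Fin.tail g) ⟨i, Nat.lt_of_succ_lt_succ hi⟩)

lemma dependsOn_cup [Mul R] {p r : ℕ} {α β : (ℕ → X) → R} (hα : DependsOn α (Set.Iic p))
    (hβ : DependsOn β (Set.Iic r)) : DependsOn (cup p α β) (Set.Iic (r + p)) := by
  intro q q' h
  exact congrArg₂ (· * ·) (hα fun m hm => h m (Nat.le_add_left_of_le hm))
    (hβ fun m hm => h (m + p) (Nat.add_le_add_right hm p))

lemma dependsOn_ofVertex (g : X → R) : DependsOn (ofVertex g) (Set.Iic 0) :=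
  fun _ _ h => congrArg g (h 0 Set.self_mem_Iic)

lemma dependsOn_delta [Add R] (g : X → R) : DependsOn (delta g) (Set.Iic 1) := fun _ _ h =>
  congrArg₂ (g · + g ·) (h 0 (Set.mem_Iic.2 zero_le_one)) (h 1 Set.self_mem_Iic)

section CommSemiring

variable [CommSemiring R]

lemma cupDelta_succ {n : ℕ} (g : Fin (n + 1) → X → R) :
    cupDelta g = cup 1 (delta (g 0)) (cupDelta (Fin.tail g)) :=
  funext fun _ => Fin.prod_univ_succ _

lemma primitive_zero {n : ℕ} (g : Fin (n + 1) → X → R) :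
    primitive g 0 = cup 0 (ofVertex (g 0)) (cupDelta (Fin.tail g)) := rfl

lemma primitive_succ {n : ℕ} (g : Fin (n + 1) → X → R) (i : Fin n) :
    primitive g i.succ = cup 1 (delta (g 0)) (primitive (Fin.tail g) i) := rfl

lemma dependsOn_cupDelta {n : ℕ} (g : Fin n → X → R) : DependsOn (cupDelta g) (Set.Iic n) := by
  intro q q' h
  exact prod_congr rfl fun j _ => by rw [h j j.2.le, h (j + 1) j.2]

lemma dependsOn_primitive_zero {n : ℕ} (g : Fin (n + 1) → X → R) :
    DependsOn (primitive g 0) (Set.Iic n) :=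
  dependsOn_cup (dependsOn_ofVertex _) (dependsOn_cupDelta _)

lemma dependsOn_primitive {n : ℕ} (g : Fin (n + 1) → X → R) (i : Fin (n + 1)) :
    DependsOn (primitive g i) (Set.Iic n) := by
  induction n with
  | zero =>
    rw [Fin.fin_one_eq_zero i]
    exact dependsOn_primitive_zero g
  | succ n ih =>
    cases i using Fin.cases with
    | zero => exact dependsOn_primitive_zero g
    | succ i => exact dependsOn_cup (dependsOn_delta _) (ih _ i)

lemma cupDelta_update_add {n : ℕ} (g : Fin n → X → R) (i : Fin n) (a b : X → R) (q : ℕ → X) :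
    cupDelta (update g i (a + b)) q = cupDelta (update g i a) q + cupDelta (update g i b) q := by
  have hsplit (c : X → R) : cupDelta (update g i c) q =
      (c (q i) + c (q (i + 1))) * ∏ j ∈ univ \ {i}, (g j (q j) + g j (q (j + 1))) := by
    simp only [cupDelta, apply_update (fun (j : Fin n) (c : X → R) => c (q j) + c (q (j + 1)))]
    exact prod_update_of_mem (mem_univ i) _ _
  simp only [hsplit, Pi.add_apply]
  ring

end CommSemiring

lemma coboundary_ofVertex [AddCommMonoid R] (g : X → R) :
    coboundary 0 (ofVertex g) = delta g := by
  funext q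
  simp [coboundary, ofVertex, delta, skip, sum_range_succ, add_comm]

section CharTwo

variable [CommRing R] [CharP R 2]

lemma coboundary_cup {p : ℕ} {α : (ℕ → X) → R} (hα : DependsOn α (Set.Iic p)) (r : ℕ)
    (β : (ℕ → X) → R) : coboundary (r + p) (cup p α β) =
      cup (p + 1) (coboundary p α) β + cup p α (coboundary r β) := by
  funext q
  have hfront (k : ℕ) (hk : p < k) : α (q ∘ skip k) = α q :=
    hα fun m hm => congrArg q (skip_of_lt (lt_of_le_of_lt hm hk))
  have hlow : ∀ k ∈ range (p + 1), cup p α β (q ∘ skip k) =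
      α (q ∘ skip k) * β fun m => q (m + (p + 1)) := fun k hk =>
    congrArg (α (q ∘ skip k) * β ·) <| funext fun m =>
      congrArg q (skip_of_le (le_add_left (Nat.lt_succ_iff.1 (mem_range.1 hk))))
  have hhigh (k : ℕ) : cup p α β (q ∘ skip (p + 1 + k)) =
      α q * β ((fun m => q (m + p)) ∘ skip (k + 1)) := by
    rw [cup, hfront _ (by omega), add_assoc, add_comm p, add_comm 1]
    exact congrArg (α q * β ·) (funext fun m => congrArg q (skip_add _ _ _))
  have hzero : (fun m => q (m + p)) ∘ skip 0 = fun m => q (m + (p + 1)) := by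
    funext m
    simp [skip, add_assoc, add_comm 1]
  calc coboundary (r + p) (cup p α β) q
      = (∑ k ∈ range (p + 1), α (q ∘ skip k)) * (β fun m => q (m + (p + 1))) +
          α q * ∑ k ∈ range (r + 1), β ((fun m => q (m + p)) ∘ skip (k + 1)) := by
        rw [coboundary, show r + p + 2 = p + 1 + (r + 1) by omega, sum_range_add,
          sum_congr rfl hlow, sum_mul, mul_sum]
        simp only [hhigh]
    _ = (cup (p + 1) (coboundary p α) β + cup p α (coboundary r β)) q := by
        -- The last face of `α` and the first face of `β` contribute equal terms, which cancel.
        simp only [Pi.add_apply, cup, coboundary]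
        rw [sum_range_succ _ (p + 1), sum_range_succ' _ (r + 1), hfront _ p.lt_succ_self, hzero]
        linear_combination -CharTwo.add_self_eq_zero (α q * β fun m => q (m + (p + 1)))

lemma coboundary_delta (g : X → R) : coboundary 1 (delta g) = 0 := by
  funext q
  calc coboundary 1 (delta g) q
      = (g (q 1) + g (q 2)) + (g (q 0) + g (q 2)) + (g (q 0) + g (q 1)) := by
        simp [coboundary, delta, skip, sum_range_succ]
    _ = 0 := by
        linear_combination CharTwo.add_self_eq_zero (g (q 0)) +
          CharTwo.add_self_eq_zero (g (q 1)) + CharTwo.add_self_eq_zero (g (q 2))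

lemma coboundary_delta_cup (g : X → R) (r : ℕ) (β : (ℕ → X) → R) :
    coboundary (r + 1) (cup 1 (delta g) β) = cup 1 (delta g) (coboundary r β) := by
  rw [coboundary_cup (dependsOn_delta g), coboundary_delta]
  funext q
  simp [cup]

lemma coboundary_cupDelta {n : ℕ} (g : Fin n → X → R) : coboundary n (cupDelta g) = 0 := by
  induction n with
  | zero =>
    funext q
    simp [coboundary, cupDelta, CharTwo.two_eq_zero]
  | succ n ih =>
    rw [cupDelta_succ, coboundary_delta_cup, ih]
    funext q
    simp [cup]

lemma coboundary_primitive_zero {n : ℕ} (g : Fin (n + 1) → X → R) :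
    coboundary n (primitive g 0) = cupDelta g := by
  have hleibniz := coboundary_cup (dependsOn_ofVertex (g 0)) n (cupDelta (Fin.tail g))
  rw [coboundary_ofVertex, coboundary_cupDelta, zero_add, ← cupDelta_succ] at hleibniz
  rw [primitive_zero]
  refine hleibniz.trans (funext fun q => ?_)
  simp [cup]

lemma coboundary_primitive {n : ℕ} (g : Fin (n + 1) → X → R) (i : Fin (n + 1)) :
    coboundary n (primitive g i) = cupDelta g := by
  induction n with
  | zero => rw [Fin.fin_one_eq_zero i, coboundary_primitive_zero]
  | succ n ih =>
    cases i using Fin.cases with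
    | zero => exact coboundary_primitive_zero g
    | succ i => rw [primitive_succ, coboundary_delta_cup, ih, ← cupDelta_succ]

lemma cupDelta_eq_zero_of_const {n : ℕ} {g : Fin n → X → R} {q : ℕ → X} {j : Fin n} {c : R}
    (h : ∀ m, g j (q m) = c) : cupDelta g q = 0 :=
  prod_eq_zero (mem_univ j) (by rw [h, h, CharTwo.add_self_eq_zero])

lemma primitive_eq_zero_of_const {n : ℕ} {g : Fin n → X → R} {i j : Fin n} {q : ℕ → X} {c : R}
    (h : ∀ m, g j (q m) = c) (hc : j = i → c = 0) : primitive g i q = 0 := by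
  induction n generalizing q with
  | zero => exact i.elim0
  | succ n ih =>
    cases i using Fin.cases with
    | zero =>
      rw [primitive_zero, cup]
      cases j using Fin.cases with
      | zero => rw [ofVertex, h, hc rfl, zero_mul]
      | succ j => rw [cupDelta_eq_zero_of_const (j := j) fun m => h (m + 0), mul_zero]
    | succ i =>
      rw [primitive_succ, cup]
      cases j using Fin.cases with
      | zero => rw [delta, h, h, CharTwo.add_self_eq_zero, zero_mul]
      | succ j =>
        rw [ih (j := j) (fun m => h (m + 1)) fun hji => hc (congrArg Fin.succ hji), mul_zero]

end CharTwo

end Cochains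

section Freudenthal

variable {d : ℕ} {R : Type*}

/-- The `m`-th vertex of the Freudenthal simplex with base point `v`, whose edge path increases the
coordinate `c` at step `π c`. -/
def vertex (π : Equiv.Perm (Fin d)) (v : Fin d → ℤ) (m : ℕ) : Fin d → ℤ :=
  fun c => v c + if (π c : ℕ) < m then 1 else 0

lemma vertex_mem_Icc (π : Equiv.Perm (Fin d)) (v : Fin d → ℤ) (m : ℕ) :
    vertex π v m ∈ Set.Icc v (v + 1) := by
  constructor <;> intro c <;> simp only [vertex, Pi.add_apply, Pi.one_apply] <;> split_ifs <;> omega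

lemma vertex_swap_mul (π : Equiv.Perm (Fin (d + 1))) (v : Fin (d + 1) → ℤ) (i : Fin d) {m : ℕ}
    (hm : m ≠ i + 1) : vertex (Equiv.swap i.castSucc i.succ * π) v m = vertex π v m := by
  funext c
  have hlt : (Equiv.swap i.castSucc i.succ (π c) : ℕ) < m ↔ (π c : ℕ) < m := by
    rw [Equiv.swap_apply_def]
    split_ifs with h₁ h₂
    · rw [h₁, Fin.val_succ, Fin.val_castSucc]
      omega
    · rw [h₂, Fin.val_succ, Fin.val_castSucc]
      omega
    · rfl
  simp only [vertex, Equiv.Perm.mul_apply, hlt]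

lemma vertex_eq_vertex_finRotate (π : Equiv.Perm (Fin (d + 1))) (v : Fin (d + 1) → ℤ) {m : ℕ}
    (hm : m ≤ d) : vertex π v m = vertex (finRotate (d + 1) * π)
      (v - fun c => if π c = Fin.last d then 1 else 0) (m + 1) := by
  funext c
  by_cases h : π c = Fin.last d
  · simp [vertex, h, hm.not_gt]
  · have hrot : (finRotate (d + 1) (π c) : ℕ) = π c + 1 := by rw [coe_finRotate, if_neg h]
    simp only [vertex, Equiv.Perm.mul_apply, hrot, Pi.sub_apply, h, if_false, sub_zero,
      Nat.add_lt_add_iff_right]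

lemma sum_perm_vertex_eq_zero [Semiring R] [CharP R 2] {F : (ℕ → Fin (d + 1) → ℤ) → R} (i : Fin d)
    (hF : DependsOn F {(i + 1 : ℕ)}ᶜ) (v : Fin (d + 1) → ℤ) :
    ∑ π : Equiv.Perm (Fin (d + 1)), F (vertex π v) = 0 := by
  refine sum_involution (fun π _ => Equiv.swap i.castSucc i.succ * π) (fun π _ => ?_)
    (fun π _ _ h => ?_) (fun _ _ => mem_univ _) (fun π _ => Equiv.swap_mul_self_mul _ _ _)
  · rw [hF fun m hm => vertex_swap_mul π v i hm, CharTwo.add_self_eq_zero]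
  · exact Fin.castSucc_lt_succ.ne (Equiv.swap_eq_one_iff.1 (mul_eq_right.1 h))

lemma sum_first_face_eq_sum_last_face [AddCommMonoid R] {V : Finset (Fin (d + 1) → ℤ)}
    {η : (ℕ → Fin (d + 1) → ℤ) → R} (hη : DependsOn η (Set.Iic d))
    (hV : ∀ π, ∀ v ∉ V, ∀ k, η (vertex π v ∘ skip k) = 0) :
    ∑ x ∈ univ ×ˢ V, η (vertex x.1 x.2 ∘ skip 0) =
      ∑ x ∈ univ ×ˢ V, η (vertex x.1 x.2 ∘ skip (d + 1)) := by
  have hsupp (k : ℕ) : (support fun x : Equiv.Perm (Fin (d + 1)) × (Fin (d + 1) → ℤ) =>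
      η (vertex x.1 x.2 ∘ skip k)) ⊆
      (univ ×ˢ V : Finset (Equiv.Perm (Fin (d + 1)) × (Fin (d + 1) → ℤ))) := fun x hx =>
    mem_product.2 ⟨mem_univ _, by_contra fun hxV => hx (hV x.1 x.2 hxV k)⟩
  let e : Equiv.Perm (Fin (d + 1)) × (Fin (d + 1) → ℤ) ≃
      Equiv.Perm (Fin (d + 1)) × (Fin (d + 1) → ℤ) :=
    Equiv.prodShear (Equiv.mulLeft (finRotate (d + 1)))
      fun π => Equiv.subRight fun c => if π c = Fin.last d then 1 else 0
  rw [← finsum_eq_sum_of_support_subset _ (hsupp 0),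
    ← finsum_eq_sum_of_support_subset _ (hsupp (d + 1)), ← finsum_comp_equiv e]
  refine finsum_congr fun x => hη fun m hm => ?_
  rw [comp_apply, comp_apply, skip_of_le m.zero_le, skip_of_lt (Nat.lt_succ_of_le hm)]
  exact (vertex_eq_vertex_finRotate x.1 x.2 hm).symm

/-- Interior faces are shared by two simplices over the same base point, and the two extremal faces
are matched by a translation. -/
theorem sum_coboundary_vertex_eq_zero [Semiring R] [CharP R 2] {V : Finset (Fin (d + 1) → ℤ)}
    {η : (ℕ → Fin (d + 1) → ℤ) → R} (hη : DependsOn η (Set.Iic d))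
    (hV : ∀ π, ∀ v ∉ V, ∀ k, η (vertex π v ∘ skip k) = 0) :
    ∑ x ∈ univ ×ˢ V, coboundary d η (vertex x.1 x.2) = 0 := by
  have hinner : ∀ k ∈ range d, ∑ x ∈ univ ×ˢ V, η (vertex x.1 x.2 ∘ skip (k + 1)) = 0 := by
    intro k hk
    rw [sum_product_right]
    refine sum_eq_zero fun v _ => sum_perm_vertex_eq_zero (F := fun q => η (q ∘ skip (k + 1)))
      ⟨k, mem_range.1 hk⟩ (fun q q' h => congrArg η (funext fun m => h _ (skip_ne _ m))) v
  simp only [coboundary]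
  rw [sum_comm, sum_range_succ, sum_range_succ', sum_eq_zero hinner, zero_add,
    sum_first_face_eq_sum_last_face hη hV, CharTwo.add_self_eq_zero]

end Freudenthal

section Degree

variable {d : ℕ} {n : ℤ} {R : Type*}

/-- The base points of the unit cells of the grid `[0, n]ᵈ`. -/
noncomputable def cells (d : ℕ) (n : ℤ) : Finset (Fin d → ℤ) := Fintype.piFinset fun _ => Ico 0 n

lemma mem_cells {v : Fin d → ℤ} : v ∈ cells d n ↔ ∀ c, 0 ≤ v c ∧ v c < n := by
  simp [cells]

/-- The sum of `δg₀ ⌣ ⋯ ⌣ δg_{d-1}` over the Freudenthal triangulation of the grid `[0, n]ᵈ`. -/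
noncomputable def degree [CommSemiring R] (n : ℤ) (g : Fin d → (Fin d → ℤ) → R) : R :=
  ∑ x ∈ univ ×ˢ cells d n, cupDelta g (vertex x.1 x.2)

/-- The boundary condition on a label in direction `j`: on the two faces of the grid `[0, n]ᵈ`
orthogonal to that direction, and beyond them, it takes the values `0` and `e`. -/
def IsLabel [Zero R] (n : ℤ) (j : Fin d) (e : R) (g : (Fin d → ℤ) → R) : Prop :=
  ∀ x, (x j ≤ 0 → g x = 0) ∧ (n ≤ x j → g x = e)

lemma IsLabel.add [AddZeroClass R] {j : Fin d} {e e' : R} {g g' : (Fin d → ℤ) → R}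
    (hg : IsLabel n j e g) (hg' : IsLabel n j e' g') : IsLabel n j (e + e') (g + g') := fun x =>
  ⟨fun h => by rw [Pi.add_apply, (hg x).1 h, (hg' x).1 h, add_zero],
    fun h => by rw [Pi.add_apply, (hg x).2 h, (hg' x).2 h]⟩

lemma IsLabel.exists_eq_on_vertex [Zero R] {j : Fin d} {e : R} {g : (Fin d → ℤ) → R}
    (hg : IsLabel n j e g) {v : Fin d → ℤ} (hv : ¬(0 ≤ v j ∧ v j < n))
    (π : Equiv.Perm (Fin d)) : ∃ t, (t = 0 ∨ t = e) ∧ ∀ m, g (vertex π v m) = t := by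
  by_cases h : 0 ≤ v j
  · exact ⟨e, .inr rfl, fun m => (hg _).2 <|
      (not_lt.1 fun h' => hv ⟨h, h'⟩).trans ((vertex_mem_Icc π v m).1 j)⟩
  · exact ⟨0, .inl rfl, fun m => (hg _).1 <|
      ((vertex_mem_Icc π v m).2 j).trans (Int.add_one_le_iff.2 (not_le.1 h))⟩

/-- The indicator function of `1 ≤ xⱼ`, the model label in direction `j`. -/
def step [Zero R] [One R] (j : Fin d) (x : Fin d → ℤ) : R :=
  if 1 ≤ x j then 1 else 0

lemma isLabel_step [Zero R] [One R] (hn : 1 ≤ n) (j : Fin d) : IsLabel n j (1 : R) (step j) :=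
  fun _ => ⟨fun h => if_neg (by omega), fun h => if_pos (hn.trans h)⟩

variable [CommRing R] [CharP R 2]

lemma degree_eq_zero {g : Fin d → (Fin d → ℤ) → R} {e : Fin d → R}
    (hg : ∀ j, IsLabel n j (e j) (g j)) {i : Fin d} (hi : e i = 0) : degree n g = 0 := by
  obtain _ | d := d
  · exact i.elim0
  rw [degree, ← coboundary_primitive g i]
  refine sum_coboundary_vertex_eq_zero (dependsOn_primitive g i) fun π v hv k => ?_
  obtain ⟨j, hj⟩ := not_forall.1 (mt mem_cells.2 hv)
  obtain ⟨t, ht, hconst⟩ := (hg j).exists_eq_on_vertex hj π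
  refine primitive_eq_zero_of_const (fun m => hconst (skip k m)) fun hji => ?_
  rwa [hji, hi, or_self] at ht

lemma degree_update {g : Fin d → (Fin d → ℤ) → R} (hg : ∀ j, IsLabel n j 1 (g j)) {i : Fin d}
    {r : (Fin d → ℤ) → R} (hr : IsLabel n i 1 r) : degree n (update g i r) = degree n g := by
  have hlabel (j : Fin d) : IsLabel n j (update (1 : Fin d → R) i 0 j)
      (update g i (r + g i) j) := by
    obtain rfl | hj := eq_or_ne j i
    · simpa only [update_self, CharTwo.add_self_eq_zero] using hr.add (hg j)
    · simpa only [update_of_ne hj, Pi.one_apply] using hg j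
  have hadd : degree n (update g i r) + degree n g = 0 := by
    rw [← degree_eq_zero hlabel (update_self i 0 (1 : Fin d → R))]
    simp only [degree, cupDelta_update_add, sum_add_distrib, update_eq_self]
  exact CharTwo.add_eq_zero.1 hadd

lemma degree_eq_degree {g g' : Fin d → (Fin d → ℤ) → R} (hg : ∀ j, IsLabel n j 1 (g j))
    (hg' : ∀ j, IsLabel n j 1 (g' j)) : degree n g = degree n g' := by
  have hpiecewise (s : Finset (Fin d)) : degree n (s.piecewise g g') = degree n g' := by
    induction s using Finset.induction_on with
    | empty => rw [piecewise_empty]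
    | insert i s _ ih =>
      have hlabel (j : Fin d) : IsLabel n j 1 (s.piecewise g g' j) :=
        s.piecewise_cases g g' (IsLabel n j 1) (hg j) (hg' j)
      rw [piecewise_insert, degree_update hlabel (hg i), ih]
  simpa only [piecewise_univ] using hpiecewise univ

lemma cupDelta_step (π : Equiv.Perm (Fin d)) (v : Fin d → ℤ) :
    cupDelta (step (R := R)) (vertex π v) = if π = 1 ∧ v = 0 then 1 else 0 := by
  have hfactor (j : Fin d) : step (R := R) j (vertex π v j) + step j (vertex π v (j + 1)) =
      if π j = j ∧ v j = 0 then 1 else 0 := by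
    simp only [step, vertex, Fin.ext_iff]
    split_ifs <;> first | omega | simp [CharTwo.add_self_eq_zero]
  simp only [cupDelta, hfactor, Fintype.prod_ite_zero, prod_const_one, Equiv.ext_iff, funext_iff,
    forall_and, Equiv.Perm.one_apply, Pi.zero_apply]

lemma degree_step (hn : 1 ≤ n) : degree n (step (d := d) (R := R)) = 1 := by
  have hmem : ((1, 0) : Equiv.Perm (Fin d) × (Fin d → ℤ)) ∈ univ ×ˢ cells d n :=
    mem_product.2 ⟨mem_univ _, mem_cells.2 fun _ => ⟨le_rfl, hn⟩⟩
  have hsingle (x : Equiv.Perm (Fin d) × (Fin d → ℤ)) :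
      cupDelta (step (R := R)) (vertex x.1 x.2) = if x = (1, 0) then 1 else 0 := by
    simp only [cupDelta_step, Prod.ext_iff]
  simp only [degree, hsingle, sum_ite_eq', hmem, if_true]

lemma exists_cell_mem_notMem {P : Fin d → Set (Fin d → ℤ)} (hn : 1 ≤ n)
    (h₀ : ∀ j x, x j ≤ 0 → x ∉ P j) (h₁ : ∀ j x, n ≤ x j → x ∈ P j) :
    ∃ v ∈ cells d n, ∀ j,
      (∃ y ∈ Set.Icc v (v + 1), y ∉ P j) ∧ ∃ z ∈ Set.Icc v (v + 1), z ∈ P j := by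
  let g (j : Fin d) : (Fin d → ℤ) → ZMod 2 := (P j).indicator 1
  have hlabel (j : Fin d) : IsLabel n j 1 (g j) := fun x =>
    ⟨fun h => Set.indicator_of_notMem (h₀ j x h) _, fun h => Set.indicator_of_mem (h₁ j x h) _⟩
  have hdegree : degree n g ≠ 0 := by
    rw [degree_eq_degree hlabel (isLabel_step hn), degree_step hn]
    exact one_ne_zero
  obtain ⟨⟨π, v⟩, hx, hne⟩ := exists_ne_zero_of_sum_ne_zero hdegree
  refine ⟨v, (mem_product.1 hx).2, fun j => ⟨?_, ?_⟩⟩ <;> by_contra! hconst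
  · exact hne <| cupDelta_eq_zero_of_const (j := j) (c := 1) fun m =>
      Set.indicator_of_mem (hconst _ (vertex_mem_Icc π v m)) _
  · exact hne <| cupDelta_eq_zero_of_const (j := j) (c := 0) fun m =>
      Set.indicator_of_notMem (hconst _ (vertex_mem_Icc π v m)) _

end Degree

section Box

variable {d N : ℕ} {a b : Fin d → ℝ}

/-- The point of the box `[a, b]` with grid coordinates `z`, when each edge is divided into `N`
equal parts. -/
noncomputable def gridPoint (a b : Fin d → ℝ) (N : ℕ) (z : Fin d → ℤ) : Fin d → ℝ :=
  fun c => AffineMap.lineMap (a c) (b c) (z c / N : ℝ)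

lemma gridPoint_mem_Icc (hab : a ≤ b) {z : Fin d → ℤ} (hz : ∀ c, 0 ≤ z c ∧ z c ≤ N) :
    gridPoint a b N z ∈ Set.Icc a b := by
  have hmem (c : Fin d) : gridPoint a b N z c ∈ Set.Icc (a c) (b c) := by
    have h₀ : (0 : ℝ) ≤ z c := by exact_mod_cast (hz c).1
    have h₁ : (z c : ℝ) ≤ N := by exact_mod_cast (hz c).2
    rw [← segment_eq_Icc (hab c), segment_eq_image_lineMap]
    exact ⟨_, ⟨by positivity, div_le_one_of_le₀ h₁ N.cast_nonneg⟩, rfl⟩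
  exact ⟨fun c => (hmem c).1, fun c => (hmem c).2⟩

lemma gridPoint_apply_of_eq_zero {z : Fin d → ℤ} {c : Fin d} (hz : z c = 0) :
    gridPoint a b N z c = a c := by
  simp [gridPoint, hz]

lemma gridPoint_apply_of_eq_natCast (hN : N ≠ 0) {z : Fin d → ℤ} {c : Fin d} (hz : z c = N) :
    gridPoint a b N z c = b c := by
  simp [gridPoint, hz, hN]

lemma dist_gridPoint_le {v z : Fin d → ℤ} (hz : z ∈ Set.Icc v (v + 1)) :
    dist (gridPoint a b N z) (gridPoint a b N v) ≤ dist a b / N := by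
  refine (dist_pi_le_iff (by positivity)).2 fun c => ?_
  have hzv : |(z c - v c : ℝ)| ≤ 1 := by
    have h₀ : (v c : ℝ) ≤ z c := by exact_mod_cast hz.1 c
    have h₁ : (z c : ℝ) ≤ v c + 1 := by exact_mod_cast hz.2 c
    exact abs_le.2 ⟨by linarith, by linarith⟩
  calc dist (gridPoint a b N z c) (gridPoint a b N v c)
      = |(z c - v c : ℝ)| / N * dist (a c) (b c) := by
        rw [gridPoint, gridPoint, dist_lineMap_lineMap, Real.dist_eq, ← sub_div, abs_div,
          Nat.abs_cast]
    _ ≤ 1 / N * dist a b := by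
        gcongr
        exact dist_le_pi_dist a b c
    _ = dist a b / N := one_div_mul_eq_div _ _

lemma exists_near_sign_changes (hab : a ≤ b) {f : Fin d → (Fin d → ℝ) → ℝ}
    (hneg : ∀ i, ∀ x ∈ Set.Icc a b, x i = a i → f i x ≤ 0)
    (hpos : ∀ i, ∀ x ∈ Set.Icc a b, x i = b i → 0 ≤ f i x) (hN : 0 < N) :
    ∃ u ∈ Set.Icc a b, ∀ j,
      (∃ y ∈ Set.Icc a b, dist y u ≤ dist a b / N ∧ f j y ≤ 0) ∧
      ∃ z ∈ Set.Icc a b, dist z u ≤ dist a b / N ∧ 0 ≤ f j z := by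
  let P (j : Fin d) : Set (Fin d → ℤ) :=
    {x | 0 < x j ∧ (N ≤ x j ∨ 0 ≤ f j (gridPoint a b N x))}
  obtain ⟨v, hv, hcell⟩ := exists_cell_mem_notMem (n := N) (P := P) (by omega)
    (fun j x hx hP => hx.not_gt hP.1) (fun j x hx => ⟨by omega, .inl hx⟩)
  have hgrid {w : Fin d → ℤ} (hw : w ∈ Set.Icc v (v + 1)) (c : Fin d) : 0 ≤ w c ∧ w c ≤ N :=
    ⟨(mem_cells.1 hv c).1.trans (hw.1 c), (hw.2 c).trans (mem_cells.1 hv c).2⟩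
  refine ⟨_, gridPoint_mem_Icc hab (hgrid ⟨le_rfl, le_add_of_nonneg_right zero_le_one⟩),
    fun j => ?_⟩
  obtain ⟨⟨y, hy, hyP⟩, z, hz, hzP⟩ := hcell j
  have hy_mem := gridPoint_mem_Icc hab (hgrid hy)
  have hz_mem := gridPoint_mem_Icc hab (hgrid hz)
  refine ⟨⟨_, hy_mem, dist_gridPoint_le hy, ?_⟩, _, hz_mem, dist_gridPoint_le hz, ?_⟩
  · obtain hy₀ | hy₀ := (hgrid hy j).1.eq_or_lt
    · exact hneg j _ hy_mem (gridPoint_apply_of_eq_zero hy₀.symm)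
    · exact (not_le.1 fun hf => hyP ⟨hy₀, .inr hf⟩).le
  · obtain hzN | hf := hzP.2
    · exact hpos j _ hz_mem (gridPoint_apply_of_eq_natCast hN.ne' ((hgrid hz j).2.antisymm hzN))
    · exact hf

lemma exists_forall_abs_lt (hab : a ≤ b) {f : Fin d → (Fin d → ℝ) → ℝ}
    (hf : ∀ i, ContinuousOn (f i) (Set.Icc a b))
    (hneg : ∀ i, ∀ x ∈ Set.Icc a b, x i = a i → f i x ≤ 0)
    (hpos : ∀ i, ∀ x ∈ Set.Icc a b, x i = b i → 0 ≤ f i x) {ε : ℝ} (hε : 0 < ε) :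
    ∃ u ∈ Set.Icc a b, ∀ i, |f i u| < ε := by
  have hunif : UniformContinuousOn (fun x i => f i x) (Set.Icc a b) :=
    isCompact_Icc.uniformContinuousOn_of_continuous (continuousOn_pi.2 hf)
  obtain ⟨δ, hδ, hδf⟩ := Metric.uniformContinuousOn_iff.1 hunif ε hε
  obtain ⟨N, hN⟩ := exists_nat_gt (dist a b / δ)
  have hN₀ : (0 : ℝ) < N := lt_of_le_of_lt (by positivity) hN
  have hmesh : dist a b / N < δ := (div_lt_comm₀ hδ hN₀).1 hN
  obtain ⟨u, hu, hsign⟩ := exists_near_sign_changes hab hneg hpos (Nat.cast_pos.1 hN₀)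
  refine ⟨u, hu, fun i => ?_⟩
  have hclose {w : Fin d → ℝ} (hw : w ∈ Set.Icc a b) (hwu : dist w u ≤ dist a b / N) :
      |f i w - f i u| < ε :=
    (dist_le_pi_dist _ _ i).trans_lt (hδf w hw u hu (hwu.trans_lt hmesh))
  obtain ⟨⟨y, hy, hyu, hfy⟩, z, hz, hzu, hfz⟩ := hsign i
  have hy_close := abs_lt.1 (hclose hy hyu)
  have hz_close := abs_lt.1 (hclose hz hzu)
  exact abs_lt.2 ⟨by linarith, by linarith⟩

lemma exists_forall_eq_zero_of_fin (hab : a ≤ b) {f : Fin d → (Fin d → ℝ) → ℝ}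
    (hf : ∀ i, ContinuousOn (f i) (Set.Icc a b))
    (hneg : ∀ i, ∀ x ∈ Set.Icc a b, x i = a i → f i x ≤ 0)
    (hpos : ∀ i, ∀ x ∈ Set.Icc a b, x i = b i → 0 ≤ f i x) :
    ∃ x ∈ Set.Icc a b, ∀ i, f i x = 0 := by
  obtain ⟨x, hx, hmin⟩ := isCompact_Icc.exists_isMinOn (Set.nonempty_Icc.2 hab)
    (continuousOn_pi.2 hf).norm
  have hnorm : ‖fun i => f i x‖ ≤ 0 := le_of_forall_pos_le_add fun ε hε => by
    obtain ⟨u, hu, hfu⟩ := exists_forall_abs_lt hab hf hneg hpos hε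
    rw [zero_add]
    exact (hmin hu).trans ((pi_norm_le_iff_of_nonneg hε.le).2 fun i => (hfu i).le)
  exact ⟨x, hx, congrFun (norm_le_zero_iff.1 hnorm)⟩

end Box

lemma exists_forall_eq_zero_of_embedding {ι : Type*} {d : ℕ} {a b : ι → ℝ} (hab : a ≤ b)
    (k : Fin d ↪ ι) {f : ι → (ι → ℝ) → ℝ} (hf : ∀ i, ContinuousOn (f i) (Set.Icc a b))
    (hneg : ∀ i, ∀ x ∈ Set.Icc a b, x i = a i → f i x ≤ 0)
    (hpos : ∀ i, ∀ x ∈ Set.Icc a b, x i = b i → 0 ≤ f i x) :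
    ∃ x ∈ Set.Icc a b, ∀ j, f (k j) x = 0 := by
  let E (x : Fin d → ℝ) : ι → ℝ := extend k x a
  have hE_apply (x : Fin d → ℝ) (j : Fin d) : E x (k j) = x j := k.injective.extend_apply x a j
  have hE_cont : Continuous E := continuous_pi fun i => by
    by_cases hi : ∃ j, k j = i
    · obtain ⟨j, rfl⟩ := hi
      simpa only [hE_apply] using continuous_apply j
    · simpa only [E, extend_apply' _ _ _ hi] using continuous_const
  have hE_maps : Set.MapsTo E (Set.Icc (a ∘ k) (b ∘ k)) (Set.Icc a b) := fun x hx => by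
    refine forall_and.1 fun i => ?_
    by_cases hi : ∃ j, k j = i
    · obtain ⟨j, rfl⟩ := hi
      rw [hE_apply]
      exact ⟨hx.1 j, hx.2 j⟩
    · rw [show E x i = a i from extend_apply' _ _ _ hi]
      exact ⟨le_rfl, hab i⟩
  obtain ⟨x, hx, hzero⟩ := exists_forall_eq_zero_of_fin (fun j => hab (k j))
    (f := fun j x => f (k j) (E x))
    (fun j => (hf (k j)).comp hE_cont.continuousOn hE_maps)
    (fun j x hx hxj => hneg (k j) _ (hE_maps hx) ((hE_apply x j).trans hxj))
    (fun j x hx hxj => hpos (k j) _ (hE_maps hx) ((hE_apply x j).trans hxj))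
  exact ⟨E x, hE_maps hx, hzero⟩

end PoincareMiranda

open PoincareMiranda in
theorem stmt2_general {ι : Type*} {a b : ι → ℝ} (hab : a ≤ b) (f : ι → (ι → ℝ) → ℝ)
    (hf : ∀ i, ContinuousOn (f i) (Set.Icc a b))
    (hneg : ∀ i, ∀ x ∈ Set.Icc a b, x i = a i → f i x ≤ 0)
    (hpos : ∀ i, ∀ x ∈ Set.Icc a b, x i = b i → 0 ≤ f i x) :
    ∃ x ∈ Set.Icc a b, ∀ i, f i x = 0 := by
  let Z (i : ι) : Set (ι → ℝ) := Set.Icc a b ∩ f i ⁻¹' {0}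
  have hZ_closed (i : ι) : IsClosed (Z i) :=
    (hf i).preimage_isClosed_of_isClosed isClosed_Icc isClosed_singleton
  have hZ_finite (s : Finset ι) : (Set.Icc a b ∩ ⋂ i ∈ s, Z i).Nonempty := by
    obtain ⟨x, hx, hzero⟩ := exists_forall_eq_zero_of_embedding hab
      (s.equivFin.symm.toEmbedding.trans (.subtype _)) hf hneg hpos
    refine ⟨x, hx, Set.mem_iInter₂.2 fun i hi => ⟨hx, ?_⟩⟩
    simpa using hzero (s.equivFin ⟨i, hi⟩)
  obtain ⟨x, hx, hxZ⟩ := isCompact_Icc.inter_iInter_nonempty Z hZ_closed hZ_finite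
  exact ⟨x, hx, fun i => (Set.mem_iInter.1 hxZ i).2⟩

/-- Poincaré–Miranda theorem. -/
theorem stmt2 {d : ℕ} (f : Fin d → ((Fin d → ℝ) → ℝ))
    (hc : ∀ i, ContinuousOn (f i) (Set.Icc (fun _ => (-1 : ℝ)) (fun _ => 1)))
    (hneg : ∀ i x, x ∈ Set.Icc (fun _ => (-1 : ℝ)) (fun _ => 1) → x i = -1 → f i x ≤ 0)
    (hpos : ∀ i x, x ∈ Set.Icc (fun _ => (-1 : ℝ)) (fun _ => 1) → x i = 1 → 0 ≤ f i x) :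
    ∃ x ∈ Set.Icc (fun _ => (-1 : ℝ)) (fun _ => 1), ∀ i, f i x = 0 :=
  stmt2_general (fun _ => by norm_num) f hc hneg hpos
end

section
/- Let P₁, ..., P_d ⊂ ℝ^d be finite point sets that are well-separated and in weak general position. Then for every (α₁, ..., α_d) ∈ [|P₁|] × ... × [|P_d|], there exists exactly one hyperplane h (an (α₁,...,α_d)-cut) such that for each i ∈ [d], exactly one point of P_i lies on h and exactly α_i − 1 points of P_i lie strictly below h, where h is oriented by the orientation of the simplex formed by the d incidence points (one from each P_i). -/
/-- The determinant of the `(d+1) × (d+1)` matrix whose first `d` rows are the points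
`q i` appended with `1` and whose last row is the query point `x` appended with `1`.
A point `x` lies strictly below (above) the hyperplane spanned by `q` iff this is
negative (positive). -/
noncomputable def detRows {d : ℕ} (q : Fin d → Fin d → ℝ) (x : Fin d → ℝ) : ℝ :=
  Matrix.det (Matrix.of (Fin.snoc (fun i => (Fin.snoc (q i) 1 : Fin (d + 1) → ℝ))
    (Fin.snoc x 1)))

/-- `(P₁, …, P_d)` is well-separated: for every index set `I` there is a hyperplane
strictly separating `⋃_{i ∈ I} P i` from `⋃_{i ∉ I} P i`. -/
def IsWellSeparated {d : ℕ} (P : Fin d → Finset (Fin d → ℝ)) : Prop :=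
  ∀ I : Set (Fin d), ∃ (w : Fin d → ℝ) (c : ℝ), w ≠ 0 ∧
    (∀ i ∈ I, ∀ q ∈ P i, ∑ j, w j * q j < c) ∧
    (∀ i, i ∉ I → ∀ q ∈ P i, c < ∑ j, w j * q j)

/-- Weak general position: no hyperplane spanned by one point from each `P i`
contains any other point of `⋃ P i`. -/
def WeakGenPos {d : ℕ} (P : Fin d → Finset (Fin d → ℝ)) : Prop :=
  ∀ p : Fin d → (Fin d → ℝ), (∀ i, p i ∈ P i) → AffineIndependent ℝ p →
    ∀ q : Fin d → ℝ, (∃ i, q ∈ P i) → q ∉ Set.range p → detRows p q ≠ 0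

/-- The hyperplane spanned by `p` (with `p i ∈ P i`) is an `(α₁,…,α_d)`-cut:
for each `i`, exactly one point of `P i` lies on it and exactly `α i − 1` points
of `P i` lie strictly below it. -/
def IsAlphaCut {d : ℕ} (P : Fin d → Finset (Fin d → ℝ)) (α : Fin d → ℕ)
    (p : Fin d → (Fin d → ℝ)) : Prop :=
  (∀ i, p i ∈ P i) ∧ AffineIndependent ℝ p ∧
    ∀ i, {q : Fin d → ℝ | q ∈ P i ∧ detRows p q = 0}.ncard = 1 ∧
      {q : Fin d → ℝ | q ∈ P i ∧ detRows p q < 0}.ncard = α i - 1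

/-! Lift each point `q` to the vector `(q, 1)` of `ℝ^(d+1)`, so that hyperplanes become linear and
well-separation says that every sign pattern on the classes is realised by a linear functional;
vectors chosen one from (the cone over) each class are therefore linearly independent.

Consequently, if a hyperplane with nonzero normal `g` meets the cone over each class, at `x i` say,
then `det (x, g) ≠ 0`, and its sign does not change under continuous motions of `(x, g)`.
Suppose two choices `p ≠ p'` have the same numbers of points below their hyperplanes, and let `f`
and `f'` be the oriented normals. Equal numbers below provide, in each class where `p` and `p'`
differ, two points on weakly opposite sides of all hyperplanes of the pencil `(1 - t) f - t f'`
(`0 ≤ t ≤ 1`), which therefore keeps meeting the cones. The pencil moves `(p, f)` to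
`(p', -f')`, although `det (p, f) = f ⬝ᵥ f` and `det (p', -f') = -(f' ⬝ᵥ f')` have opposite
signs.

So the numbers of points below determine the choice. As there are as many choices as admissible
numbers, all of these occur.
-/

open Set
open scoped Finset

theorem smul_add_smul_mem_convexCone {R E : Type*} [Semiring R] [PartialOrder R]
    [AddCommMonoid E] [Module R E] {K : ConvexCone R E} {x y : E} (hx : x ∈ K) (hy : y ∈ K)
    {a b : R} (ha : 0 ≤ a) (hb : 0 ≤ b) (hab : 0 < a + b) : a • x + b • y ∈ K := by
  rcases ha.eq_or_lt with rfl | ha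
  · simpa using K.smul_mem (by simpa using hab) hy
  rcases hb.eq_or_lt with rfl | hb
  · simpa using K.smul_mem ha hx
  exact K.add_mem (K.smul_mem ha hx) (K.smul_mem hb hy)

section LinearlySeparated

variable {R ι E : Type*} [CommRing R] [LinearOrder R] [AddCommGroup E] [Module R E]
  {S : ι → Set E}

variable (R) in
/-- The homogeneous form of well-separation: every sign pattern on the index set is realised by a
linear functional of constant sign on each of the sets. -/
def LinearlySeparated (S : ι → Set E) : Prop :=
  ∀ I : Set ι, ∃ φ : Module.Dual R E,
    (∀ i ∈ I, ∀ x ∈ S i, φ x < 0) ∧ ∀ i ∉ I, ∀ x ∈ S i, 0 < φ x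

namespace LinearlySeparated

theorem eq_of_mem (hS : LinearlySeparated R S) {i j : ι} {x : E} (hi : x ∈ S i) (hj : x ∈ S j) :
    i = j := by
  obtain ⟨φ, hneg, hpos⟩ := hS {i}
  by_contra hij
  exact (hneg i rfl x hi).not_gt (hpos j (Ne.symm hij) x hj)

variable [IsStrictOrderedRing R]

theorem linearIndependent (hS : LinearlySeparated R S) {x : ι → E} (hx : ∀ i, x i ∈ S i) :
    LinearIndependent R x := by
  rw [linearIndependent_iff']
  intro s a hsum
  obtain ⟨φ, hneg, hpos⟩ := hS {i | 0 < a i}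
  have hterm : ∀ i ∈ s, a i * φ (x i) ≤ 0 := by
    intro i _
    by_cases hi : 0 < a i
    · exact mul_nonpos_of_nonneg_of_nonpos hi.le (hneg i hi _ (hx i)).le
    · exact mul_nonpos_of_nonpos_of_nonneg (not_lt.1 hi) (hpos i hi _ (hx i)).le
  have hzero : ∑ i ∈ s, a i * φ (x i) = 0 := by simpa using congrArg φ hsum
  have hne : ∀ i, φ (x i) ≠ 0 := by
    intro i
    by_cases hi : 0 < a i
    · exact (hneg i hi _ (hx i)).ne
    · exact (hpos i hi _ (hx i)).ne'
  exact fun i hi =>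
    (mul_eq_zero.1 ((Finset.sum_eq_zero_iff_of_nonpos hterm).1 hzero i hi)).resolve_right (hne i)

theorem convexCone_hull (hS : LinearlySeparated R S) :
    LinearlySeparated R fun i => (ConvexCone.hull R (S i) : Set E) := by
  intro I
  obtain ⟨φ, hneg, hpos⟩ := hS I
  have hull_pos {ψ : Module.Dual R E} {i : ι} (h : ∀ x ∈ S i, 0 < ψ x) :
      ∀ x ∈ ConvexCone.hull R (S i), 0 < ψ x := fun x hx =>
    ConvexCone.hull_min (C := (ConvexCone.strictlyPositive R R).comap ψ) h hx
  refine ⟨φ, fun i hi x hx => ?_, fun i hi => hull_pos (hpos i hi)⟩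
  exact neg_pos.1 (hull_pos (ψ := -φ) (fun y hy => neg_pos.2 (hneg i hi y hy)) x hx)

end LinearlySeparated

end LinearlySeparated

section NormalVector

variable {n : ℕ}

section CommRing

variable {R : Type*} [CommRing R]

/-- The generalised cross product of `n` vectors in `R^(n+1)`: the vector representing
`v ↦ det (x, v)`, a normal of the hyperplane spanned by `x` when `x` is linearly independent. -/
def normalVector (x : Fin n → Fin (n + 1) → R) : Fin (n + 1) → R :=
  (dotProductEquiv R (Fin (n + 1))).symm
    (MultilinearMap.curryRight Matrix.detRowAlternating.toMultilinearMap x)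

theorem normalVector_dotProduct (x : Fin n → Fin (n + 1) → R) (v : Fin (n + 1) → R) :
    normalVector x ⬝ᵥ v = (Matrix.of (Fin.snoc x v : Fin (n + 1) → Fin (n + 1) → R)).det :=
  LinearMap.congr_fun ((dotProductEquiv R (Fin (n + 1))).apply_symm_apply
    (MultilinearMap.curryRight Matrix.detRowAlternating.toMultilinearMap x)) v

theorem normalVector_dotProduct_self (x : Fin n → Fin (n + 1) → R) (i : Fin n) :
    normalVector x ⬝ᵥ x i = 0 := by
  rw [normalVector_dotProduct]
  exact Matrix.det_zero_of_row_eq (Fin.castSucc_lt_last i).ne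
    (funext fun k => by simp)

end CommRing

theorem normalVector_dotProduct_ne_zero_iff {𝕜 : Type*} [Field 𝕜] {x : Fin n → Fin (n + 1) → 𝕜}
    {v : Fin (n + 1) → 𝕜} :
    normalVector x ⬝ᵥ v ≠ 0 ↔ LinearIndependent 𝕜 (Fin.snoc x v : Fin (n + 1) → _) := by
  rw [normalVector_dotProduct, ← isUnit_iff_ne_zero, ← Matrix.isUnit_iff_isUnit_det,
    ← Matrix.linearIndependent_rows_iff_isUnit]
  rfl

theorem normalVector_ne_zero {𝕜 : Type*} [Field 𝕜] {x : Fin n → Fin (n + 1) → 𝕜}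
    (hx : LinearIndependent 𝕜 x) : normalVector x ≠ 0 := by
  obtain ⟨v, hv⟩ := exists_linearIndependent_snoc_of_lt_finrank hx (by simp)
  intro h
  exact normalVector_dotProduct_ne_zero_iff.2 hv (by rw [h, zero_dotProduct])

theorem normalVector_dotProduct_ne_zero_of_orthogonal {𝕜 : Type*} [Field 𝕜] [LinearOrder 𝕜]
    [IsStrictOrderedRing 𝕜] {x : Fin n → Fin (n + 1) → 𝕜} {g : Fin (n + 1) → 𝕜}
    (hx : LinearIndependent 𝕜 x) (hg : g ≠ 0) (hgx : ∀ i, g ⬝ᵥ x i = 0) :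
    normalVector x ⬝ᵥ g ≠ 0 := by
  refine normalVector_dotProduct_ne_zero_iff.2 (hx.finSnoc fun hmem => hg ?_)
  have hspan : Submodule.span 𝕜 (range x) ≤ LinearMap.ker (dotProductEquiv 𝕜 _ g) :=
    Submodule.span_le.2 (range_subset_iff.2 hgx)
  exact dotProduct_self_eq_zero.1 (hspan hmem)

theorem continuous_normalVector_dotProduct {R : Type*} [CommRing R] [TopologicalSpace R]
    [IsTopologicalRing R] :
    Continuous fun z : (Fin n → Fin (n + 1) → R) × (Fin (n + 1) → R) =>
      normalVector z.1 ⬝ᵥ z.2 := by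
  simp only [normalVector_dotProduct]
  exact (continuous_fst.finSnoc continuous_snd).matrix_det

end NormalVector

section Transversals

variable {n : ℕ}

/-- The pairs `(x, g)` of an oriented linear hyperplane, encoded by its normal `g`, and a choice
of points `x i` of `S i` on it. -/
def transversals (S : Fin n → Set (Fin (n + 1) → ℝ)) :
    Set ((Fin n → Fin (n + 1) → ℝ) × (Fin (n + 1) → ℝ)) :=
  {z | z.2 ≠ 0 ∧ ∀ i, z.1 i ∈ S i ∧ z.2 ⬝ᵥ z.1 i = 0}

variable {S : Fin n → Set (Fin (n + 1) → ℝ)}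

theorem neg_mem_transversals {x : Fin n → Fin (n + 1) → ℝ} {g : Fin (n + 1) → ℝ}
    (h : (x, g) ∈ transversals S) : (x, -g) ∈ transversals S :=
  ⟨neg_ne_zero.2 h.1, fun i => ⟨(h.2 i).1, by rw [neg_dotProduct, neg_eq_zero]; exact (h.2 i).2⟩⟩

theorem LinearlySeparated.normalVector_dotProduct_pos_of_joinedIn (hS : LinearlySeparated ℝ S)
    {x y : Fin n → Fin (n + 1) → ℝ} {f g : Fin (n + 1) → ℝ}
    (h : JoinedIn (transversals S) (x, f) (y, g)) (hf : 0 < normalVector x ⬝ᵥ f) :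
    0 < normalVector y ⬝ᵥ g := by
  obtain ⟨γ, hγ⟩ := h
  by_contra! hg
  obtain ⟨t, ht⟩ := mem_range_of_exists_le_of_exists_ge
    (continuous_normalVector_dotProduct.comp γ.continuous) (c := 0)
    ⟨1, by simpa using hg⟩ ⟨0, by simpa using hf.le⟩
  obtain ⟨hne, hx⟩ := hγ t
  exact normalVector_dotProduct_ne_zero_of_orthogonal (hS.linearIndependent fun i => (hx i).1) hne
    (fun i => (hx i).2) ht

theorem joinedIn_transversals_of_convex (hS : ∀ i, Convex ℝ (S i))
    {x y : Fin n → Fin (n + 1) → ℝ} {g : Fin (n + 1) → ℝ} (hx : (x, g) ∈ transversals S)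
    (hy : (y, g) ∈ transversals S) : JoinedIn (transversals S) (x, g) (y, g) := by
  refine JoinedIn.ofLine (f := fun t => (fun i => AffineMap.lineMap (x i) (y i) t, g))
    (by fun_prop) (by simp) (by simp) ?_
  rintro _ ⟨t, ht, rfl⟩
  refine ⟨hx.1, fun i => ⟨?_, ?_⟩⟩
  · exact (hS i).lineMap_mem (hx.2 i).1 (hy.2 i).1 ht
  · have hxi : g ⬝ᵥ x i = 0 := (hx.2 i).2
    have hyi : g ⬝ᵥ y i = 0 := (hy.2 i).2
    simp [AffineMap.lineMap_apply, hxi, hyi]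

theorem joinedIn_transversals_pencil (hS : ∀ i, Convex ℝ (S i)) {x y : Fin n → Fin (n + 1) → ℝ}
    {f g : Fin (n + 1) → ℝ} (hx : (x, f) ∈ transversals S) (hy : (y, -g) ∈ transversals S)
    (hfg : ∀ t ∈ Icc (0 : ℝ) 1, (1 - t) • f - t • g ≠ 0)
    (hpath : ∀ i, ∃ u : ℝ → Fin (n + 1) → ℝ, Continuous u ∧
      ∀ t ∈ Icc (0 : ℝ) 1, u t ∈ S i ∧ ((1 - t) • f - t • g) ⬝ᵥ u t = 0) :
    JoinedIn (transversals S) (x, f) (y, -g) := by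
  choose u hu hmem using hpath
  have hpencil : ∀ t ∈ Icc (0 : ℝ) 1,
      ((fun i => u i t), (1 - t) • f - t • g) ∈ transversals S :=
    fun t ht => ⟨hfg t ht, fun i => hmem i t ht⟩
  have hzero : ((fun i => u i 0), f) ∈ transversals S := by simpa using hpencil 0 (by simp)
  have hone : ((fun i => u i 1), -g) ∈ transversals S := by simpa using hpencil 1 (by simp)
  have hmid : JoinedIn (transversals S) ((fun i => u i 0), f) ((fun i => u i 1), -g) :=
    JoinedIn.ofLine (f := fun t => ((fun i => u i t), (1 - t) • f - t • g))
      (by fun_prop) (by simp) (by simp) (by rintro _ ⟨t, ht, rfl⟩; exact hpencil t ht)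
  exact ((joinedIn_transversals_of_convex hS hx hzero).trans hmid).trans
    (joinedIn_transversals_of_convex hS hone hy)

theorem exists_continuous_mem_pencil_eq_zero {E : Type*} [AddCommGroup E] [Module ℝ E]
    [TopologicalSpace E] [ContinuousAdd E] [ContinuousSMul ℝ E] {K : ConvexCone ℝ E}
    {φ ψ : Module.Dual ℝ E} {a b : E} (ha : a ∈ K) (hb : b ∈ K)
    (hφa : φ a ≤ 0) (hψa : 0 ≤ ψ a) (hφb : 0 ≤ φ b) (hψb : ψ b ≤ 0)
    (hφ : φ a < φ b) (hψ : ψ b < ψ a) :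
    ∃ u : ℝ → E, Continuous u ∧
      ∀ t ∈ Icc (0 : ℝ) 1, u t ∈ K ∧ ((1 - t) • φ - t • ψ) (u t) = 0 := by
  refine ⟨fun t => ((1 - t) * φ b - t * ψ b) • a + (t * ψ a - (1 - t) * φ a) • b, by fun_prop,
    fun t ⟨ht0, ht1⟩ => ⟨smul_add_smul_mem_convexCone ha hb ?_ ?_ ?_, ?_⟩⟩
  · nlinarith
  · nlinarith
  · rcases ht0.eq_or_lt with rfl | ht0
    · linarith
    · nlinarith [mul_pos ht0 (sub_pos.2 hψ), mul_nonneg (sub_nonneg.2 ht1) (sub_pos.2 hφ).le]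
  · simp only [LinearMap.sub_apply, LinearMap.smul_apply, map_add, map_smul, smul_eq_mul]
    ring

end Transversals

section Counting

variable {β R : Type*} [Fintype β] [LinearOrder R] [Zero R] {f g : β → R} {p q : β}

theorem exists_nonpos_nonneg_of_card_neg_le (hp : f p = 0)
    (hcard : #{k | g k < 0} ≤ #{k | f k < 0}) : ∃ k, f k ≤ 0 ∧ 0 ≤ g k := by
  by_contra! h
  refine hcard.not_gt (Finset.card_lt_card (Finset.ssubset_iff_of_subset ?_ |>.2 ⟨p, ?_, ?_⟩))
  · exact Finset.monotone_filter_right _ fun k _ hk => h k hk.le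
  · simpa using h p hp.le
  · simp [hp]

theorem exists_crossing_of_card_neg_eq (hf : ∀ k, f k = 0 ↔ k = p) (hg : ∀ k, g k = 0 ↔ k = q)
    (hpq : p ≠ q) (hcard : #{k | f k < 0} = #{k | g k < 0}) :
    ∃ a b, (f a ≤ 0 ∧ 0 ≤ f b ∧ f a < f b) ∧ (g b ≤ 0 ∧ 0 ≤ g a ∧ g b < g a) := by
  obtain ⟨a, hfa, hga⟩ := exists_nonpos_nonneg_of_card_neg_le ((hf p).2 rfl) hcard.ge
  obtain ⟨b, hgb, hfb⟩ := exists_nonpos_nonneg_of_card_neg_le ((hg q).2 rfl) hcard.le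
  have hab : a ≠ b := by
    rintro rfl
    exact hpq (((hf a).1 (hfa.antisymm hfb)).symm.trans ((hg a).1 (hgb.antisymm hga)))
  refine ⟨a, b, ⟨hfa, hfb, (hfa.trans hfb).lt_of_ne fun h => hab ?_⟩,
    hgb, hga, (hgb.trans hga).lt_of_ne fun h => hab ?_⟩
  · rw [(hf a).1 (hfa.antisymm (h ▸ hfb)), (hf b).1 ((h ▸ hfa).antisymm hfb)]
  · rw [(hg a).1 ((h ▸ hgb).antisymm hga), (hg b).1 (hgb.antisymm (h ▸ hga))]

end Counting

section VectorConfiguration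

variable {n : ℕ} {κ : Fin n → Type*} {v : ∀ i, κ i → Fin (n + 1) → ℝ}

/-- The normal of the linear hyperplane through one chosen vector of each class. -/
def cutNormal (v : ∀ i, κ i → Fin (n + 1) → ℝ) (s : ∀ i, κ i) : Fin (n + 1) → ℝ :=
  normalVector fun i => v i (s i)

/-- The homogeneous form of weak general position: a hyperplane through one chosen vector of each
class contains no other vector of the configuration. -/
def IsGeneric (v : ∀ i, κ i → Fin (n + 1) → ℝ) : Prop :=
  ∀ (s : ∀ i, κ i) (i : Fin n) (k : κ i), cutNormal v s ⬝ᵥ v i k = 0 → k = s i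

theorem IsGeneric.cutNormal_dotProduct_eq_zero_iff (hv : IsGeneric v) {s : ∀ i, κ i} {i : Fin n}
    (k : κ i) : cutNormal v s ⬝ᵥ v i k = 0 ↔ k = s i :=
  ⟨hv s i k, by rintro rfl; exact normalVector_dotProduct_self (fun j => v j (s j)) i⟩

theorem cutNormal_ne_zero (hsep : LinearlySeparated ℝ fun i => range (v i)) (s : ∀ i, κ i) :
    cutNormal v s ≠ 0 :=
  normalVector_ne_zero (hsep.linearIndependent fun i => mem_range_self (s i))

theorem pencil_cutNormal_ne_zero (hsep : LinearlySeparated ℝ fun i => range (v i))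
    (hv : IsGeneric v) {s s' : ∀ i, κ i} (hne : s ≠ s') (t : ℝ) :
    (1 - t) • cutNormal v s - t • cutNormal v s' ≠ 0 := by
  intro h
  obtain ⟨i, hi⟩ := Function.ne_iff.1 hne
  have hdot : (1 - t) * (cutNormal v s ⬝ᵥ v i (s' i)) = 0 := by
    simpa [sub_dotProduct, hv.cutNormal_dotProduct_eq_zero_iff (s := s') (s' i) |>.2 rfl]
      using congrArg (· ⬝ᵥ v i (s' i)) h
  have ht : 1 - t = 0 := (mul_eq_zero.1 hdot).resolve_right fun h0 => hi (hv s i _ h0).symm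
  obtain rfl : t = 1 := by linarith
  exact cutNormal_ne_zero hsep s' (by simpa using h)

theorem exists_path_pencil_cutNormal [∀ i, Fintype (κ i)] (hv : IsGeneric v) {s s' : ∀ i, κ i}
    {i : Fin n} (hcard : #{k | cutNormal v s ⬝ᵥ v i k < 0} = #{k | cutNormal v s' ⬝ᵥ v i k < 0}) :
    ∃ u : ℝ → Fin (n + 1) → ℝ, Continuous u ∧
      ∀ t ∈ Icc (0 : ℝ) 1, u t ∈ ConvexCone.hull ℝ (range (v i)) ∧
        ((1 - t) • cutNormal v s - t • cutNormal v s') ⬝ᵥ u t = 0 := by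
  have hmem : ∀ k, v i k ∈ ConvexCone.hull ℝ (range (v i)) :=
    fun k => ConvexCone.subset_hull (mem_range_self k)
  by_cases hi : s i = s' i
  · refine ⟨fun _ => v i (s i), continuous_const, fun t _ => ⟨hmem _, ?_⟩⟩
    rw [sub_dotProduct, smul_dotProduct, smul_dotProduct,
      (hv.cutNormal_dotProduct_eq_zero_iff _).2 rfl, (hv.cutNormal_dotProduct_eq_zero_iff _).2 hi,
      smul_zero, smul_zero, sub_zero]
  · obtain ⟨a, b, ⟨hfa, hfb, hf⟩, hgb, hga, hg⟩ := exists_crossing_of_card_neg_eq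
      (hv.cutNormal_dotProduct_eq_zero_iff (s := s)) (hv.cutNormal_dotProduct_eq_zero_iff (s := s'))
      hi hcard
    simpa using exists_continuous_mem_pencil_eq_zero (φ := dotProductEquiv ℝ _ (cutNormal v s))
      (ψ := dotProductEquiv ℝ _ (cutNormal v s')) (hmem a) (hmem b) hfa hga hfb hgb hf hg

theorem cutNormal_mem_transversals (hsep : LinearlySeparated ℝ fun i => range (v i))
    (s : ∀ i, κ i) :
    ((fun i => v i (s i)), cutNormal v s) ∈
      transversals fun i => (ConvexCone.hull ℝ (range (v i)) : Set (Fin (n + 1) → ℝ)) :=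
  ⟨cutNormal_ne_zero hsep s, fun i => ⟨ConvexCone.subset_hull (mem_range_self (s i)),
    normalVector_dotProduct_self (fun j => v j (s j)) i⟩⟩

theorem eq_of_card_cutNormal_neg_eq [∀ i, Fintype (κ i)]
    (hsep : LinearlySeparated ℝ fun i => range (v i)) (hv : IsGeneric v) {s s' : ∀ i, κ i}
    (hcard : ∀ i, #{k | cutNormal v s ⬝ᵥ v i k < 0} = #{k | cutNormal v s' ⬝ᵥ v i k < 0}) :
    s = s' := by
  by_contra hne
  have hself (r : ∀ i, κ i) : 0 < cutNormal v r ⬝ᵥ cutNormal v r := by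
    simpa using Matrix.dotProduct_star_self_pos_iff.2 (cutNormal_ne_zero hsep r)
  have hjoined := joinedIn_transversals_pencil
    (fun i => (ConvexCone.hull ℝ (range (v i))).convex)
    (cutNormal_mem_transversals hsep s)
    (neg_mem_transversals (cutNormal_mem_transversals hsep s'))
    (fun t _ => pencil_cutNormal_ne_zero hsep hv hne t)
    (fun i => exists_path_pencil_cutNormal hv (hcard i))
  have hend : 0 < cutNormal v s' ⬝ᵥ -cutNormal v s' :=
    hsep.convexCone_hull.normalVector_dotProduct_pos_of_joinedIn hjoined (hself s)
  rw [dotProduct_neg] at hend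
  exact (neg_pos.1 hend).not_gt (hself s')

theorem existsUnique_card_cutNormal_neg_eq [∀ i, Fintype (κ i)]
    (hsep : LinearlySeparated ℝ fun i => range (v i)) (hv : IsGeneric v) {m : Fin n → ℕ}
    (hm : ∀ i, m i < Fintype.card (κ i)) :
    ∃! s : ∀ i, κ i, ∀ i, #{k | cutNormal v s ⬝ᵥ v i k < 0} = m i := by
  classical
  let below (s : ∀ i, κ i) (i : Fin n) : Fin (Fintype.card (κ i)) :=
    ⟨#{k | cutNormal v s ⬝ᵥ v i k < 0}, Finset.card_lt_univ_of_notMem (x := s i)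
      (by simp [(hv.cutNormal_dotProduct_eq_zero_iff (s i)).2 rfl])⟩
  have hinj : Function.Injective below := fun s s' h =>
    eq_of_card_cutNormal_neg_eq hsep hv fun i => congrArg Fin.val (congrFun h i)
  have hbij : Function.Bijective below :=
    (Fintype.bijective_iff_injective_and_card below).2 ⟨hinj, by simp⟩
  simpa [below, funext_iff, Fin.ext_iff] using hbij.existsUnique fun i => ⟨m i, hm i⟩

end VectorConfiguration

section HomLift

variable {d : ℕ}

/-- The homogeneous coordinates `(x, 1)` of a point. -/
def homLift {R : Type*} [One R] (x : Fin d → R) : Fin (d + 1) → R := Fin.snoc x 1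

theorem snoc_dotProduct_homLift {R : Type*} [NonAssocSemiring R] (w x : Fin d → R) (c : R) :
    (Fin.snoc w c : Fin (d + 1) → R) ⬝ᵥ homLift x = w ⬝ᵥ x + c := by
  simp [dotProduct, homLift, Fin.sum_univ_castSucc]

theorem affineIndependent_of_linearIndependent_homLift {R ι : Type*} [Ring R]
    {p : ι → Fin d → R} (hp : LinearIndependent R fun i => homLift (p i)) :
    AffineIndependent R p := by
  rw [affineIndependent_iff]
  refine fun s w hw hwp => linearIndependent_iff'.1 hp s w (funext fun j => ?_)
  refine Fin.lastCases ?_ (fun j => ?_) j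
  · simpa [homLift] using hw
  · simpa [homLift] using congrFun hwp j

theorem detRows_eq_normalVector_dotProduct (p : Fin d → Fin d → ℝ) (x : Fin d → ℝ) :
    detRows p x = normalVector (fun i => homLift (p i)) ⬝ᵥ homLift x :=
  (normalVector_dotProduct _ _).symm

variable {P : Fin d → Finset (Fin d → ℝ)}

/-- The vector configuration of the homogeneous coordinates of the points of each `P i`. -/
def homConfig (P : Fin d → Finset (Fin d → ℝ)) (i : Fin d) (q : P i) : Fin (d + 1) → ℝ :=
  homLift (q : Fin d → ℝ)

theorem detRows_eq_cutNormal_dotProduct (s : ∀ i, P i) {i : Fin d} (q : P i) :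
    detRows (fun j => (s j : Fin d → ℝ)) q = cutNormal (homConfig P) s ⬝ᵥ homConfig P i q :=
  detRows_eq_normalVector_dotProduct _ _

namespace IsWellSeparated

theorem linearlySeparated (hws : IsWellSeparated P) :
    LinearlySeparated ℝ fun i => range (homConfig P i) := by
  intro I
  obtain ⟨w, c, -, hlt, hgt⟩ := hws I
  have happly (x : Fin d → ℝ) :
      dotProductEquiv ℝ _ (Fin.snoc w (-c)) (homLift x) = w ⬝ᵥ x - c := by
    simp [snoc_dotProduct_homLift, sub_eq_add_neg]
  refine ⟨dotProductEquiv ℝ _ (Fin.snoc w (-c)), ?_, ?_⟩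
  · rintro i hi _ ⟨q, rfl⟩
    exact (happly q).trans_lt (sub_neg.2 (hlt i hi q q.2))
  · rintro i hi _ ⟨q, rfl⟩
    exact (sub_pos.2 (hgt i hi q q.2)).trans_eq (happly q).symm

theorem affineIndependent (hws : IsWellSeparated P) (s : ∀ i, P i) :
    AffineIndependent ℝ fun i => (s i : Fin d → ℝ) :=
  affineIndependent_of_linearIndependent_homLift
    (hws.linearlySeparated.linearIndependent fun i => mem_range_self (s i))

theorem isGeneric_homConfig (hws : IsWellSeparated P) (hgp : WeakGenPos P) :
    IsGeneric (homConfig P) := by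
  intro s i q hq
  rw [← detRows_eq_cutNormal_dotProduct] at hq
  have hmem : (q : Fin d → ℝ) ∈ range fun j => (s j : Fin d → ℝ) :=
    not_not.1 fun h => hgp _ (fun j => (s j).2) (hws.affineIndependent s) q ⟨i, q.2⟩ h hq
  obtain ⟨j, hj⟩ := hmem
  obtain rfl : j = i := hws.linearlySeparated.eq_of_mem (mem_range_self (s j))
    ⟨q, congrArg homLift hj.symm⟩
  exact Subtype.ext hj.symm

theorem isAlphaCut_coe_iff (hws : IsWellSeparated P) (hgp : WeakGenPos P) {α : Fin d → ℕ}
    (s : ∀ i, P i) :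
    IsAlphaCut P α (fun i => (s i : Fin d → ℝ)) ↔
      ∀ i, #{q | cutNormal (homConfig P) s ⬝ᵥ homConfig P i q < 0} = α i - 1 := by
  have himage (i : Fin d) (r : ℝ → Prop) :
      {q | q ∈ P i ∧ r (detRows (fun j => (s j : Fin d → ℝ)) q)} =
        Subtype.val '' {q : P i | r (cutNormal (homConfig P) s ⬝ᵥ homConfig P i q)} := by
    ext q
    simp [← detRows_eq_cutNormal_dotProduct, and_comm]
  have hon (i : Fin d) :
      {q | q ∈ P i ∧ detRows (fun j => (s j : Fin d → ℝ)) q = 0}.ncard = 1 := by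
    simp [himage i (· = 0), (hws.isGeneric_homConfig hgp).cutNormal_dotProduct_eq_zero_iff]
  have hbelow (i : Fin d) :
      {q | q ∈ P i ∧ detRows (fun j => (s j : Fin d → ℝ)) q < 0}.ncard =
        #{q | cutNormal (homConfig P) s ⬝ᵥ homConfig P i q < 0} := by
    rw [himage i (· < 0), ncard_image_of_injective _ Subtype.val_injective,
      ← ncard_coe_finset, Finset.coe_filter_univ]
  simp [IsAlphaCut, hws.affineIndependent s, hon, hbelow]

end IsWellSeparated

end HomLift

/-- The discrete α-Ham-Sandwich theorem: for well-separated point sets in weak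
general position, every `(α₁,…,α_d)`-cut exists and is unique. -/
theorem stmt4 {d : ℕ} (P : Fin d → Finset (Fin d → ℝ))
    (hws : IsWellSeparated P) (hgp : WeakGenPos P)
    (α : Fin d → ℕ) (hα : ∀ i, 1 ≤ α i ∧ α i ≤ (P i).card) :
    ∃! p : Fin d → (Fin d → ℝ), IsAlphaCut P α p := by
  have hm (i : Fin d) : α i - 1 < Fintype.card (P i) := by
    rw [Fintype.card_coe]
    have := hα i
    lia
  obtain ⟨s, hs, hunique⟩ := existsUnique_card_cutNormal_neg_eq hws.linearlySeparated
    (hws.isGeneric_homConfig hgp) hm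
  refine ⟨fun i => s i, (hws.isAlphaCut_coe_iff hgp s).2 hs, fun p hp => ?_⟩
  lift p to ∀ i, P i using hp.1
  rw [hunique p ((hws.isAlphaCut_coe_iff hgp p).1 hp)]
end

section
/- Suppose f₁, ..., f_d : [-1,1]^d → ℝ are continuous, each f_i strictly negative on the face x_i = -1 and strictly positive on the face x_i = 1, and suppose the common zero set Z = {x : f_i(x) = 0 for all i} is finite. If additionally for distinct points of Z the sign patterns of some auxiliary counting functions are distinct, then in particular Z is nonempty; i.e., under just the boundary sign conditions, there exists x* ∈ (-1,1)^d (in the open cube) with f_i(x*) = 0 for all i. -/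
/-!
Cut the box into `n ^ d` small boxes and label each grid vertex, for every `i`, by the sign of
`f i`; the label is `0` on the lower face and `1` on the upper face in direction `i`. A label is a
`0`-cochain `g i` on the grid, and the mod 2 cup product `δg₁ ∪ ⋯ ∪ δg_d` sums to `1` over the
small boxes: by Stokes' theorem the sum of `δ(g₁ (δg₂ ∪ ⋯ ∪ δg_d))` is a sum over the boundary,
where only the face `x₁ = n` contributes, and there the claim is the one for `d - 1` labels. So
some small box meets both labels in every direction (Kuhn's cubical lemma), and a limit of such
boxes as `n → ∞` is a common zero.
-/

section Cubical

open Finset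

variable {ι : Type*} [DecidableEq ι]

lemma sum_sum_erase_eq_zero_of_symm {R : Type*} [Ring R] [CharP R 2] (s : Finset ι)
    (φ : ι → ι → R) (hφ : ∀ a b, φ a b = φ b a) : ∑ a ∈ s, ∑ b ∈ s.erase a, φ a b = 0 := by
  rw [sum_sigma']
  refine sum_involution (fun p _ => ⟨p.2, p.1⟩) (fun p _ => ?_) (fun p hp _ h => ?_)
    (fun p hp => ?_) fun _ _ => rfl
  · rw [hφ p.2, CharTwo.add_self_eq_zero]
  · simp only [mem_sigma, mem_erase] at hp
    exact hp.2.1 (congrArg Sigma.fst h)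
  · simp only [mem_sigma, mem_erase] at hp ⊢
    exact ⟨hp.2.2, hp.2.1.symm, hp.1⟩

/-- Mod 2 cochains on the cubical complex of the grid `ℕ ^ ι`: `Z x s` is the value of `Z` at the
cube with least vertex `x` which extends by one unit in the directions `s`. -/
abbrev CubicalCochain (ι : Type*) : Type _ := (ι → ℕ) → Finset ι → ZMod 2

namespace CubicalCochain

/-- The coboundary `δZ`, whose value at a cube is the sum of the values of `Z` at its facets. -/
def coboundary (Z : CubicalCochain ι) : CubicalCochain ι := fun x s =>
  ∑ a ∈ s, (Z (x + Pi.single a 1) (s.erase a) + Z x (s.erase a))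

lemma coboundary_coboundary (Z : CubicalCochain ι) : Z.coboundary.coboundary = 0 := by
  funext x s
  simp only [coboundary, ← sum_add_distrib]
  refine sum_sum_erase_eq_zero_of_symm s _ fun a b => ?_
  rw [erase_right_comm, add_right_comm x]
  ring

lemma coboundary_smul_apply (g : (ι → ℕ) → ZMod 2) (Z : CubicalCochain ι) (x : ι → ℕ)
    (s : Finset ι) :
    (g • Z : CubicalCochain ι).coboundary x s =
      ∑ a ∈ s, (g (x + Pi.single a 1) - g x) * Z (x + Pi.single a 1) (s.erase a) +
        g x * Z.coboundary x s := by
  simp only [coboundary, mul_sum, ← sum_add_distrib, Pi.smul_apply', Pi.smul_apply, smul_eq_mul]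
  exact sum_congr rfl fun a _ => by ring

/-- The cup product `δ(g i₁) ∪ ⋯ ∪ δ(g iₖ)` of the coboundaries of functions on the grid. It is
built from the right by `δg ∪ Z = δ(g • Z)`, valid for a cocycle `Z`. -/
def coboundaryProd (g : ι → (ι → ℕ) → ZMod 2) : List ι → CubicalCochain ι
  | [] => fun _ => Pi.single ∅ 1
  | i :: l => (g i • coboundaryProd g l : CubicalCochain ι).coboundary

lemma coboundary_coboundaryProd (g : ι → (ι → ℕ) → ZMod 2) (l : List ι) :
    (coboundaryProd g l).coboundary = 0 := by
  cases l with
  | nil =>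
    funext x s
    exact sum_eq_zero fun a _ => CharTwo.add_self_eq_zero _
  | cons i l => exact coboundary_coboundary _

lemma coboundaryProd_cons_apply (g : ι → (ι → ℕ) → ZMod 2) (i : ι) (l : List ι) (x : ι → ℕ)
    (s : Finset ι) :
    coboundaryProd g (i :: l) x s =
      ∑ a ∈ s, (g i (x + Pi.single a 1) - g i x) *
        coboundaryProd g l (x + Pi.single a 1) (s.erase a) := by
  rw [coboundaryProd, coboundary_smul_apply, coboundary_coboundaryProd, Pi.zero_apply,
    Pi.zero_apply, mul_zero, add_zero]

lemma exists_ne_of_coboundaryProd_ne_zero {g : ι → (ι → ℕ) → ZMod 2} {l : List ι} {x : ι → ℕ}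
    {s : Finset ι} (h : coboundaryProd g l x s ≠ 0) {j : ι} (hj : j ∈ l) :
    ∃ u ∈ Set.Icc x (x + ∑ a ∈ s, Pi.single a 1), ∃ v ∈ Set.Icc x (x + ∑ a ∈ s, Pi.single a 1),
      g j u ≠ g j v := by
  induction l generalizing x s with
  | nil => exact absurd hj List.not_mem_nil
  | cons i l ih =>
    rw [coboundaryProd_cons_apply] at h
    obtain ⟨a, ha, hne⟩ := exists_ne_zero_of_sum_ne_zero h
    have htop : x + Pi.single a 1 + ∑ b ∈ s.erase a, Pi.single b 1 = x + ∑ b ∈ s, Pi.single b 1 :=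
      by rw [add_assoc, add_sum_erase s (fun b => (Pi.single b 1 : ι → ℕ)) ha]
    have hle : x + Pi.single a 1 ≤ x + ∑ b ∈ s, Pi.single b 1 := htop ▸ le_self_add
    rcases List.mem_cons.1 hj with rfl | hj
    · exact ⟨x + Pi.single a 1, ⟨le_self_add, hle⟩, x, ⟨le_rfl, le_self_add⟩,
        sub_ne_zero.1 (left_ne_zero_of_mul hne)⟩
    · obtain ⟨u, hu, v, hv, huv⟩ := ih (right_ne_zero_of_mul hne) hj
      rw [htop] at hu hv
      exact ⟨u, ⟨le_self_add.trans hu.1, hu.2⟩, v, ⟨le_self_add.trans hv.1, hv.2⟩, huv⟩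

end CubicalCochain

/-- A mod 2 labelling of the grid for each coordinate direction, equal to `0` on the lower face and
to `1` on the upper face of `[0, n] ^ ι` in that direction. -/
structure IsKuhnLabelling (n : ℕ) (g : ι → (ι → ℕ) → ZMod 2) : Prop where
  eq_zero : ∀ j x, x j = 0 → g j x = 0
  eq_one : ∀ j x, x j = n → g j x = 1

lemma IsKuhnLabelling.coboundaryProd_eq_zero {n : ℕ} {g : ι → (ι → ℕ) → ZMod 2}
    (hg : IsKuhnLabelling n g) {l : List ι} {x : ι → ℕ} {s : Finset ι} {j : ι} (hjl : j ∈ l)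
    (hjs : j ∉ s) (hx : x j = 0 ∨ x j = n) : CubicalCochain.coboundaryProd g l x s = 0 := by
  by_contra h
  obtain ⟨u, hu, v, hv, huv⟩ := CubicalCochain.exists_ne_of_coboundaryProd_ne_zero h hjl
  have hcoord {w : ι → ℕ} (hw : w ∈ Set.Icc x (x + ∑ a ∈ s, Pi.single a 1)) : w j = x j := by
    refine le_antisymm ?_ (hw.1 j)
    simpa only [Pi.add_apply, Finset.sum_apply, sum_pi_single, if_neg hjs, add_zero] using hw.2 j
  rcases hx with hx | hx
  · exact huv ((hg.eq_zero j u ((hcoord hu).trans hx)).trans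
      (hg.eq_zero j v ((hcoord hv).trans hx)).symm)
  · exact huv ((hg.eq_one j u ((hcoord hu).trans hx)).trans
      (hg.eq_one j v ((hcoord hv).trans hx)).symm)

variable [Fintype ι]

/-- The least vertices of the unit cubes in the directions `s` that tile the face of `[0, n] ^ ι`
on which the coordinates outside `s` are equal to `n`. -/
def upperFaceCubes (n : ℕ) (s : Finset ι) : Finset (ι → ℕ) :=
  Fintype.piFinset fun j => if j ∈ s then range n else {n}

lemma mem_upperFaceCubes {n : ℕ} {s : Finset ι} {x : ι → ℕ} :
    x ∈ upperFaceCubes n s ↔ ∀ j, if j ∈ s then x j < n else x j = n := by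
  refine Fintype.mem_piFinset.trans (forall_congr' fun j => ?_)
  split_ifs <;> simp

lemma upperFaceCubes_empty (n : ℕ) : upperFaceCubes n (∅ : Finset ι) = {fun _ => n} := by
  ext x
  simp [mem_upperFaceCubes, funext_iff]

lemma eq_of_mem_upperFaceCubes {n : ℕ} {s : Finset ι} {x : ι → ℕ} (hx : x ∈ upperFaceCubes n s)
    {j : ι} (hj : j ∉ s) : x j = n := by
  simpa only [if_neg hj] using mem_upperFaceCubes.1 hx j

lemma sum_upperFaceCubes_eq_sum_erase {M : Type*} [AddCommMonoid M] (n : ℕ) {s : Finset ι} {a : ι}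
    (ha : a ∈ s) (F : (ι → ℕ) → M) :
    ∑ x ∈ upperFaceCubes n s, F x =
      ∑ x ∈ upperFaceCubes n (s.erase a), ∑ k ∈ range n, F (Function.update x a k) := by
  rw [← sum_product']
  refine sum_nbij' (fun x => (Function.update x a n, x a)) (fun p => Function.update p.1 a p.2)
    ?_ ?_ ?_ ?_ ?_
  · intro x hx
    grind [mem_upperFaceCubes, Function.update_apply]
  · rintro ⟨x, k⟩ hx
    grind [mem_upperFaceCubes, Function.update_apply]
  · simp
  · rintro ⟨x, k⟩ hx
    have hxa : x a = n := eq_of_mem_upperFaceCubes (mem_product.1 hx).1 (notMem_erase a s)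
    simp [← hxa]
  · simp

lemma sum_upperFaceCubes_sub {M : Type*} [AddCommGroup M] (n : ℕ) {s : Finset ι} {a : ι}
    (ha : a ∈ s) (F : (ι → ℕ) → M) :
    ∑ x ∈ upperFaceCubes n s, (F (x + Pi.single a 1) - F x) =
      ∑ x ∈ upperFaceCubes n (s.erase a), (F x - F (Function.update x a 0)) := by
  rw [sum_upperFaceCubes_eq_sum_erase n ha]
  refine sum_congr rfl fun x hx => ?_
  have hshift (k : ℕ) :
      Function.update x a k + Pi.single a 1 = Function.update x a (k + 1) := by
    ext j
    by_cases hj : j = a <;> simp [hj]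
  simp only [hshift]
  rw [sum_range_sub fun k => F (Function.update x a k),
    Function.update_eq_self_iff.2 (eq_of_mem_upperFaceCubes hx (notMem_erase a s)).symm]

lemma sum_upperFaceCubes_coboundary (n : ℕ) (s : Finset ι) (Z : CubicalCochain ι) :
    ∑ x ∈ upperFaceCubes n s, Z.coboundary x s =
      ∑ a ∈ s, ∑ x ∈ upperFaceCubes n (s.erase a),
        (Z x (s.erase a) - Z (Function.update x a 0) (s.erase a)) := by
  simp only [CubicalCochain.coboundary]
  rw [sum_comm]
  refine sum_congr rfl fun a ha => ?_
  simp only [← CharTwo.sub_eq_add (R := ZMod 2)]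
  exact sum_upperFaceCubes_sub n ha fun x => Z x (s.erase a)

lemma IsKuhnLabelling.sum_coboundaryProd {n : ℕ} {g : ι → (ι → ℕ) → ZMod 2}
    (hg : IsKuhnLabelling n g) {l : List ι} (hl : l.Nodup) :
    ∑ x ∈ upperFaceCubes n l.toFinset, CubicalCochain.coboundaryProd g l x l.toFinset = 1 := by
  induction l with
  | nil => simp [upperFaceCubes_empty, CubicalCochain.coboundaryProd]
  | cons i l ih =>
    obtain ⟨hi, hl⟩ := List.nodup_cons.1 hl
    have hi' : i ∉ l.toFinset := List.mem_toFinset.not.2 hi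
    rw [CubicalCochain.coboundaryProd, sum_upperFaceCubes_coboundary, List.toFinset_cons,
      sum_insert hi', erase_insert hi', add_eq_left.2, ← ih hl]
    · refine sum_congr rfl fun x hx => ?_
      simp only [Pi.smul_apply', Pi.smul_apply, smul_eq_mul]
      rw [hg.eq_one i x (eq_of_mem_upperFaceCubes hx hi'),
        hg.eq_zero i _ (Function.update_self ..), one_mul, zero_mul, sub_zero]
    · refine sum_eq_zero fun a ha => sum_eq_zero fun x hx => ?_
      have hxa : x a = n := eq_of_mem_upperFaceCubes hx (notMem_erase _ _)
      simp only [Pi.smul_apply', Pi.smul_apply, smul_eq_mul]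
      rw [hg.coboundaryProd_eq_zero (List.mem_toFinset.1 ha) (notMem_erase _ _) (.inr hxa),
        hg.coboundaryProd_eq_zero (List.mem_toFinset.1 ha) (notMem_erase _ _)
          (.inl (Function.update_self ..)), mul_zero, mul_zero, sub_zero]

end Cubical

open Finset in
theorem IsKuhnLabelling.exists_cube {ι : Type*} [Finite ι] {n : ℕ} {g : ι → (ι → ℕ) → ZMod 2}
    (hg : IsKuhnLabelling n g) :
    ∃ x : ι → ℕ, (∀ j, x j < n) ∧
      ∀ j, (∃ u ∈ Set.Icc x (x + 1), g j u = 0) ∧ ∃ v ∈ Set.Icc x (x + 1), g j v = 1 := by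
  classical
  cases nonempty_fintype ι
  have hsum := hg.sum_coboundaryProd (univ : Finset ι).nodup_toList
  rw [toList_toFinset] at hsum
  obtain ⟨x, hx, hne⟩ := exists_ne_zero_of_sum_ne_zero (hsum.trans_ne one_ne_zero)
  refine ⟨x, fun j => ?_, fun j => ?_⟩
  · simpa only [mem_univ, if_true] using mem_upperFaceCubes.1 hx j
  · obtain ⟨u, hu, v, hv, huv⟩ :=
      CubicalCochain.exists_ne_of_coboundaryProd_ne_zero hne (mem_toList.2 (mem_univ j))
    rw [show ∑ a, (Pi.single a 1 : ι → ℕ) = 1 from univ_sum_single 1] at hu hv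
    have hcases : ∀ p q : ZMod 2, p ≠ q → p = 0 ∧ q = 1 ∨ p = 1 ∧ q = 0 := by decide
    rcases hcases _ _ huv with ⟨hu0, hv1⟩ | ⟨hu1, hv0⟩
    · exact ⟨⟨u, hu, hu0⟩, v, hv, hv1⟩
    · exact ⟨⟨v, hv, hv0⟩, u, hu, hu1⟩

section PoincareMiranda

open Filter Topology

variable {ι : Type*} {a b : ι → ℝ}

/-- The vertex with index `x` of the subdivision of the box `[a, b]` into `n` equal parts in each
direction. -/
noncomputable def gridPoint (a b : ι → ℝ) (n : ℕ) (x : ι → ℕ) : ι → ℝ := fun i =>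
  AffineMap.lineMap (a i) (b i) ((x i : ℝ) / n)

lemma gridPoint_mem_Icc (hab : a ≤ b) {n : ℕ} {x : ι → ℕ} (hx : ∀ i, x i ≤ n) :
    gridPoint a b n x ∈ Set.Icc a b := by
  have h (i : ι) : gridPoint a b n x i ∈ Set.Icc (a i) (b i) :=
    (convex_Icc (a i) (b i)).lineMap_mem (Set.left_mem_Icc.2 (hab i)) (Set.right_mem_Icc.2 (hab i))
      ⟨by positivity, div_le_one_of_le₀ (mod_cast hx i) n.cast_nonneg⟩
  exact ⟨fun i => (h i).1, fun i => (h i).2⟩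

lemma gridPoint_apply_of_eq_zero {n : ℕ} {x : ι → ℕ} {i : ι} (hx : x i = 0) :
    gridPoint a b n x i = a i := by
  rw [gridPoint, hx, Nat.cast_zero, zero_div, AffineMap.lineMap_apply_zero]

lemma gridPoint_apply_of_eq {n : ℕ} (hn : n ≠ 0) {x : ι → ℕ} {i : ι} (hx : x i = n) :
    gridPoint a b n x i = b i := by
  rw [gridPoint, hx, div_self (Nat.cast_ne_zero.2 hn), AffineMap.lineMap_apply_one]

lemma dist_gridPoint_le [Fintype ι] {n : ℕ} {x u : ι → ℕ} (hu : u ∈ Set.Icc x (x + 1)) :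
    dist (gridPoint a b n u) (gridPoint a b n x) ≤ dist a b / n := by
  refine (dist_pi_le_iff (by positivity)).2 fun i => ?_
  have hxu : (x i : ℝ) ≤ u i := mod_cast hu.1 i
  have hux : (u i : ℝ) ≤ x i + 1 := mod_cast hu.2 i
  have hdist : dist ((u i : ℝ) / n) (x i / n) ≤ 1 / n := by
    rw [Real.dist_eq, ← sub_div, abs_of_nonneg (div_nonneg (by linarith) n.cast_nonneg)]
    gcongr
    linarith
  calc dist (gridPoint a b n u i) (gridPoint a b n x i)
      = dist ((u i : ℝ) / n) (x i / n) * dist (a i) (b i) := dist_lineMap_lineMap ..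
    _ ≤ 1 / n * dist a b := by gcongr; exact dist_le_pi_dist a b i
    _ = dist a b / n := by ring

lemma exists_near_nonpos_nonneg [Fintype ι] (hab : a ≤ b) {f : ι → (ι → ℝ) → ℝ}
    (hneg : ∀ i, ∀ x ∈ Set.Icc a b, x i = a i → f i x ≤ 0)
    (hpos : ∀ i, ∀ x ∈ Set.Icc a b, x i = b i → 0 ≤ f i x) {δ : ℝ} (hδ : 0 < δ) :
    ∃ x ∈ Set.Icc a b, ∀ i, (∃ u ∈ Set.Icc a b, dist u x < δ ∧ f i u ≤ 0) ∧
      ∃ v ∈ Set.Icc a b, dist v x < δ ∧ 0 ≤ f i v := by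
  classical
  obtain ⟨n, hn⟩ := exists_nat_gt (dist a b / δ)
  have hn0 : (0 : ℝ) < n := (by positivity : 0 ≤ dist a b / δ).trans_lt hn
  have hnδ : dist a b / n < δ := (div_lt_comm₀ hδ hn0).1 hn
  have hn0' : n ≠ 0 := Nat.cast_ne_zero.1 hn0.ne'
  let p : (ι → ℕ) → ι → ℝ := gridPoint a b n
  -- On the lower face, where `f i` may vanish, the condition `x i ≠ 0` forces the label `0`.
  -- Outside `[0, n] ^ ι` the labels carry no information.
  have hlabel : IsKuhnLabelling n fun i x =>
      if x i ≠ 0 ∧ ((∀ k, x k ≤ n) → 0 ≤ f i (p x)) then (1 : ZMod 2) else 0 :=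
    { eq_zero := fun i x hx => if_neg fun h => h.1 hx
      eq_one := fun i x hx => if_pos ⟨hx.trans_ne hn0', fun hxn =>
        hpos i _ (gridPoint_mem_Icc hab hxn) (gridPoint_apply_of_eq hn0' hx)⟩ }
  obtain ⟨x, hxn, hx⟩ := hlabel.exists_cube
  have hle {w : ι → ℕ} (hw : w ∈ Set.Icc x (x + 1)) (k : ι) : w k ≤ n := (hw.2 k).trans (hxn k)
  have hmem {w : ι → ℕ} (hw : w ∈ Set.Icc x (x + 1)) : p w ∈ Set.Icc a b :=
    gridPoint_mem_Icc hab (hle hw)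
  have hdist {w : ι → ℕ} (hw : w ∈ Set.Icc x (x + 1)) : dist (p w) (p x) < δ :=
    (dist_gridPoint_le hw).trans_lt hnδ
  refine ⟨p x, hmem ⟨le_rfl, le_self_add⟩, fun i => ?_⟩
  obtain ⟨⟨u, hu, hu0⟩, v, hv, hv1⟩ := hx i
  refine ⟨⟨p u, hmem hu, hdist hu, ?_⟩, p v, hmem hv, hdist hv, ?_⟩
  · by_contra! hfu
    have hui : u i ≠ 0 := fun h => hfu.not_ge (hneg i _ (hmem hu) (gridPoint_apply_of_eq_zero h))
    rw [if_pos ⟨hui, fun _ => hfu.le⟩] at hu0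
    exact one_ne_zero hu0
  · by_contra! hfv
    rw [if_neg fun h => hfv.not_ge (h.2 (hle hv))] at hv1
    exact zero_ne_one hv1

theorem poincare_miranda [Finite ι] (hab : a ≤ b) {f : ι → (ι → ℝ) → ℝ}
    (hc : ∀ i, ContinuousOn (f i) (Set.Icc a b))
    (hneg : ∀ i, ∀ x ∈ Set.Icc a b, x i = a i → f i x ≤ 0)
    (hpos : ∀ i, ∀ x ∈ Set.Icc a b, x i = b i → 0 ≤ f i x) :
    ∃ x ∈ Set.Icc a b, ∀ i, f i x = 0 := by
  cases nonempty_fintype ι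
  choose x hx hnear using fun n : ℕ =>
    exists_near_nonpos_nonneg hab hneg hpos (Nat.one_div_pos_of_nat (α := ℝ) (n := n))
  choose hu hv using hnear
  choose u hu hux hfu using hu
  choose v hv hvx hfv using hv
  obtain ⟨z, hz, φ, hφ, hlim⟩ := isCompact_Icc.tendsto_subseq hx
  have hδ : Tendsto (fun n => 1 / ((φ n : ℝ) + 1)) atTop (𝓝 0) :=
    tendsto_one_div_add_atTop_nhds_zero_nat.comp hφ.tendsto_atTop
  have tendsto_f {w : ℕ → ι → ℝ} (hw : ∀ n, w n ∈ Set.Icc a b)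
      (hwx : ∀ n, dist (w n) (x n) < 1 / ((n : ℝ) + 1)) (i : ι) :
      Tendsto (fun n => f i (w (φ n))) atTop (𝓝 (f i z)) := by
    have hwz : Tendsto (fun n => w (φ n)) atTop (𝓝 z) := by
      refine hlim.congr_dist (squeeze_zero (fun _ => dist_nonneg) (fun n => ?_) hδ)
      rw [Function.comp_apply, dist_comm]
      exact (hwx (φ n)).le
    exact (hc i z hz).tendsto.comp (tendsto_nhdsWithin_iff.2 ⟨hwz, .of_forall fun n => hw (φ n)⟩)
  refine ⟨z, hz, fun i => le_antisymm ?_ ?_⟩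
  · exact le_of_tendsto' (tendsto_f (fun n => hu n i) (fun n => hux n i) i) fun n => hfu _ i
  · exact ge_of_tendsto' (tendsto_f (fun n => hv n i) (fun n => hvx n i) i) fun n => hfv _ i

theorem stmt15_general [Finite ι] (hab : a ≤ b) (f : ι → (ι → ℝ) → ℝ)
    (hc : ∀ i, ContinuousOn (f i) (Set.Icc a b))
    (hneg : ∀ i, ∀ x ∈ Set.Icc a b, x i = a i → f i x < 0)
    (hpos : ∀ i, ∀ x ∈ Set.Icc a b, x i = b i → 0 < f i x) :
    ∃ x : ι → ℝ, (∀ i, x i ∈ Set.Ioo (a i) (b i)) ∧ ∀ i, f i x = 0 := by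
  obtain ⟨z, hz, hfz⟩ := poincare_miranda hab hc (fun i x hx h => (hneg i x hx h).le)
    fun i x hx h => (hpos i x hx h).le
  exact ⟨z, fun i => ⟨(hz.1 i).lt_of_ne' fun h => (hneg i z hz h).ne (hfz i),
    (hz.2 i).lt_of_ne fun h => (hpos i z hz h).ne' (hfz i)⟩, hfz⟩

end PoincareMiranda

/-- Strict Poincaré–Miranda: if `f i < 0` on the face `x i = −1` and `f i > 0` on
the face `x i = 1`, then there is a common zero in the open cube `(−1,1)^d`. -/
theorem stmt15 {d : ℕ} (f : Fin d → ((Fin d → ℝ) → ℝ))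
    (hc : ∀ i, ContinuousOn (f i) (Set.Icc (fun _ => (-1 : ℝ)) (fun _ => 1)))
    (hneg : ∀ i x, x ∈ Set.Icc (fun _ => (-1 : ℝ)) (fun _ => 1) → x i = -1 → f i x < 0)
    (hpos : ∀ i x, x ∈ Set.Icc (fun _ => (-1 : ℝ)) (fun _ => 1) → x i = 1 → 0 < f i x) :
    ∃ x : Fin d → ℝ, (∀ i, x i ∈ Set.Ioo (-1 : ℝ) 1) ∧ ∀ i, f i x = 0 :=
  stmt15_general (fun _ => by norm_num) f hc hneg hpos
end
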